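/- Let α ∈ (2,3) and n ≥ 2. The O'Hara energy E^α is continuously (Fréchet) differentiable on the set of all injective regular curves in H^{(1+α)/2,2}(ℝ/ℤ,ℝⁿ); in particular this set is open in H^{(1+α)/2,2}(ℝ/ℤ,ℝⁿ), E^α is finite on it, and the Fréchet derivative γ ↦ (E^α)'(γ) ∈ (H^{(1+α)/2,2}(ℝ/ℤ,ℝⁿ))* is continuous. -/

import Mathlib

open MeasureTheory Filter Set
open scoped RealInnerProductSpace ENNReal Topology

noncomputable section

/-- `ℝⁿ` -/
abbrev Rn (n : ℕ) := EuclideanSpace ℝ (Fin n)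

variable {n : ℕ}

/-- A 1-periodic curve is injective as a map on `ℝ/ℤ`. -/
def PerInjective (γ : ℝ → Rn n) : Prop :=
  ∀ u v : ℝ, γ u = γ v → ∃ k : ℤ, v = u + k

/-- `γ` is a regular curve: `γ'(u) ≠ 0` for all `u`. -/
def RegularCurve (γ : ℝ → Rn n) : Prop := ∀ u : ℝ, deriv γ u ≠ 0

/-- `γ` is parametrized by arc-length: `|γ'(u)| = 1` for all `u`. -/
def ArcLengthParam (γ : ℝ → Rn n) : Prop := ∀ u : ℝ, ‖deriv γ u‖ = 1

/-- The length `L(γ) = ∫₀¹ |γ'(θ)| dθ` of the closed curve `γ`. -/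
def curveLen (γ : ℝ → Rn n) : ℝ := ∫ θ in (0:ℝ)..1, ‖deriv γ θ‖

/-- The arc length `L(γ|_{[u,u+w]}) = |∫_u^{u+w} |γ'(θ)| dθ|`. -/
def arcLen (γ : ℝ → Rn n) (u w : ℝ) : ℝ := |∫ θ in u..(u + w), ‖deriv γ θ‖|

/-- The intrinsic distance `d_γ(u+w,u)`. -/
def idist (γ : ℝ → Rn n) (u w : ℝ) : ℝ :=
  min (arcLen γ u w) (curveLen γ - arcLen γ u w)

/-- The integrand of the O'Hara energy `E^α`. -/
def ohIntegrand (α : ℝ) (γ : ℝ → Rn n) (u w : ℝ) : ℝ :=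
  (1 / ‖γ (u + w) - γ u‖ ^ α - 1 / idist γ u w ^ α) * ‖deriv γ (u + w)‖ * ‖deriv γ u‖

/-- The O'Hara energy `E^α`, with values in `[0,∞]`. -/
def oharaE (α : ℝ) (γ : ℝ → Rn n) : ℝ≥0∞ :=
  ∫⁻ u in Ioc (0:ℝ) 1, ∫⁻ w in Ioo (-(1:ℝ)/2) (1/2), ENNReal.ofReal (ohIntegrand α γ u w)

/-- The O'Hara energy `E^α` as a real number. -/
def oharaER (α : ℝ) (γ : ℝ → Rn n) : ℝ := (oharaE α γ).toReal

/-- `[−1/2,−ε] ∪ [ε,1/2]`, the `w`-section of `U_ε`. -/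
def Wset (ε : ℝ) : Set ℝ := Icc (-(1:ℝ)/2) (-ε) ∪ Icc ε (1/2)

/-- The truncated O'Hara energy `E^α_ε`, an integral over `U_ε`. -/
def oharaEeps (α ε : ℝ) (γ : ℝ → Rn n) : ℝ :=
  ∫ u in Ioc (0:ℝ) 1, ∫ w in Wset ε, ohIntegrand α γ u w

/-- `F` has directional (Gâteaux) derivative `d` at `γ` in direction `h`. -/
def HasDirDeriv (F : (ℝ → Rn n) → ℝ) (γ h : ℝ → Rn n) (d : ℝ) : Prop :=
  Tendsto (fun τ : ℝ => (F (γ + τ • h) - F γ) / τ) (𝓝[≠] (0:ℝ)) (𝓝 d)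

/-- Squared Gagliardo seminorm `[f]²_{H^{s,2}}` of a 1-periodic map. -/
def gagliardoSq (s : ℝ) {E : Type*} [NormedAddCommGroup E] (f : ℝ → E) : ℝ≥0∞ :=
  ∫⁻ u in Ioc (0:ℝ) 1, ∫⁻ w in Ioo (-(1:ℝ)/2) (1/2),
    ENNReal.ofReal (‖f (u + w) - f u‖ ^ 2 / |w| ^ (1 + 2 * s))

/-- Membership in the fractional Sobolev space `H^{1+σ,2}(ℝ/ℤ,ℝⁿ)`, `σ ∈ (0,1)`:
a 1-periodic `C¹` function whose derivative has finite Gagliardo seminorm of order `σ`. -/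
def MemH1 (σ : ℝ) (γ : ℝ → Rn n) : Prop :=
  Function.Periodic γ 1 ∧ ContDiff ℝ 1 γ ∧ gagliardoSq σ (deriv γ) < ⊤

/-- The norm of `H^{1+σ,2}(ℝ/ℤ,ℝⁿ)`. -/
def H1Norm (σ : ℝ) (γ : ℝ → Rn n) : ℝ :=
  Real.sqrt (∫ u in Ioc (0:ℝ) 1, (‖γ u‖ ^ 2 + ‖deriv γ u‖ ^ 2)) +
    Real.sqrt ((gagliardoSq σ (deriv γ)).toReal)

/-- Membership of a 1-periodic map in `L²(ℝ/ℤ)`. -/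
def MemL2per {E : Type*} [NormedAddCommGroup E] (f : ℝ → E) : Prop :=
  Function.Periodic f 1 ∧ AEStronglyMeasurable f (volume : Measure ℝ) ∧
    IntegrableOn (fun u => ‖f u‖ ^ 2) (Ioc (0:ℝ) 1) volume

/-- Membership in the fractional Sobolev space `H^{s,2}(ℝ/ℤ)`, `s ∈ (0,1)`. -/
def MemHs0 (s : ℝ) {E : Type*} [NormedAddCommGroup E] (f : ℝ → E) : Prop :=
  MemL2per f ∧ gagliardoSq s f < ⊤

/-- The norm of `H^{s,2}(ℝ/ℤ)` for `s ∈ (0,1)`: `‖f‖_{L²} + [f]_{H^{s,2}}`. -/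
def Hs0Norm (s : ℝ) {E : Type*} [NormedAddCommGroup E] (f : ℝ → E) : ℝ :=
  Real.sqrt (∫ u in Ioc (0:ℝ) 1, ‖f u‖ ^ 2) + Real.sqrt ((gagliardoSq s f).toReal)

/-- The `k`-th Fourier coefficient (`j`-th component) of a 1-periodic curve. -/
def fCoef (γ : ℝ → Rn n) (k : ℤ) (j : Fin n) : ℂ :=
  ∫ u in (0:ℝ)..1, (γ u j : ℂ) * Complex.exp ((-2) * (Real.pi : ℂ) * Complex.I * (k : ℂ) * (u : ℂ))

/-- Membership in `H^{s,2}(ℝ/ℤ,ℝⁿ)` via the Fourier characterization: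
`((1+|k|²)^{s/2} γ̂(k))_k ∈ ℓ²`. -/
def MemHF (s : ℝ) (γ : ℝ → Rn n) : Prop :=
  Function.Periodic γ 1 ∧ Continuous γ ∧
    Summable (fun k : ℤ => (1 + (k : ℝ) ^ 2) ^ s * ∑ j, ‖fCoef γ k j‖ ^ 2)

/-- The squared Fourier norm of `H^{s,2}(ℝ/ℤ,ℝⁿ)`. -/
def fNormSq (s : ℝ) (γ : ℝ → Rn n) : ℝ :=
  ∑' k : ℤ, (1 + (k : ℝ) ^ 2) ^ s * ∑ j, ‖fCoef γ k j‖ ^ 2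

/-- C¹-norm of a 1-periodic map. -/
def c1Norm (f : ℝ → Rn n) : ℝ := ⨆ u : Icc (0:ℝ) 1, (‖f u.1‖ + ‖deriv f u.1‖)

/-- The integrand of `Q(γ,h)`. -/
def Qintegrand (α : ℝ) (γ h : ℝ → Rn n) (u w : ℝ) : ℝ :=
  ⟪deriv γ u, deriv h u⟫ / |w| ^ α
    - ⟪γ (u + w) - γ u, h (u + w) - h u⟫ / |w| ^ (α + 2)

/-- The integrand of `R(γ,h)`. -/
def Rintegrand (α : ℝ) (γ h : ℝ → Rn n) (u w : ℝ) : ℝ :=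
  2 * ⟪deriv γ u, deriv h u⟫ * (1 / ‖γ (u + w) - γ u‖ ^ α - 1 / |w| ^ α)
    - α * ⟪γ (u + w) - γ u, h (u + w) - h u⟫ *
        (1 / ‖γ (u + w) - γ u‖ ^ (α + 2) - 1 / |w| ^ (α + 2))

/-- `R(γ,h)`, an absolutely convergent double integral over `(ℝ/ℤ) × [−1/2,1/2]`. -/
def Rval (α : ℝ) (γ h : ℝ → Rn n) : ℝ :=
  ∫ p in (Ioc (0:ℝ) 1) ×ˢ (Icc (-(1:ℝ)/2) (1/2)), Rintegrand α γ h p.1 p.2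

/-! ### Mixed second differences -/

section SqBound

variable {E F G : Type*} [NormedAddCommGroup E] [NormedAddCommGroup F] [NormedAddCommGroup G]

/-- Four values `f i j`, thought of as `φ(x + i h + j k)`, whose values, first differences and
mixed second difference are bounded by `κ`, `κ a`, `κ b` and `κ a b`. -/
structure SqBound (κ a b : ℝ) (f : Bool → Bool → E) : Prop where
  bd : ∀ i j, ‖f i j‖ ≤ κ
  fst : ∀ j, ‖f true j - f false j‖ ≤ κ * a
  snd : ∀ i, ‖f i true - f i false‖ ≤ κ * b
  mixed : ‖f true true - f true false - f false true + f false false‖ ≤ κ * a * b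

namespace SqBound

variable {κ κ' a b : ℝ}

theorem nonneg {f : Bool → Bool → E} (hf : SqBound κ a b f) : 0 ≤ κ :=
  (norm_nonneg _).trans (hf.bd true true)

theorem mono {f : Bool → Bool → E} (hf : SqBound κ a b f) (h : κ ≤ κ') (ha : 0 ≤ a)
    (hb : 0 ≤ b) : SqBound κ' a b f where
  bd i j := (hf.bd i j).trans h
  fst j := (hf.fst j).trans (by gcongr)
  snd i := (hf.snd i).trans (by gcongr)
  mixed := hf.mixed.trans (by gcongr)

theorem add {f g : Bool → Bool → E} (hf : SqBound κ a b f) (hg : SqBound κ' a b g) :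
    SqBound (κ + κ') a b (fun i j => f i j + g i j) where
  bd i j := norm_add_le_of_le (hf.bd i j) (hg.bd i j)
  fst j := by
    have := norm_add_le_of_le (hf.fst j) (hg.fst j)
    rw [← add_mul] at this
    convert this using 2; congr 1; abel
  snd j := by
    have := norm_add_le_of_le (hf.snd j) (hg.snd j)
    rw [← add_mul] at this
    convert this using 2; congr 1; abel
  mixed := by
    have := norm_add_le_of_le hf.mixed hg.mixed
    rw [← add_mul, ← add_mul] at this
    convert this using 2; congr 1; abel

theorem neg {f : Bool → Bool → E} (hf : SqBound κ a b f) :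
    SqBound κ a b (fun i j => - f i j) where
  bd i j := by simpa using hf.bd i j
  fst j := by
    have := hf.fst j
    rw [← norm_neg] at this
    convert this using 2; congr 1; abel
  snd j := by
    have := hf.snd j
    rw [← norm_neg] at this
    convert this using 2; congr 1; abel
  mixed := by
    have := hf.mixed
    rw [← norm_neg] at this
    convert this using 2; congr 1; abel

theorem sub {f g : Bool → Bool → E} (hf : SqBound κ a b f) (hg : SqBound κ' a b g) :
    SqBound (κ + κ') a b (fun i j => f i j - g i j) := by
  simpa only [sub_eq_add_neg] using hf.add hg.neg

variable [NormedSpace ℝ E] [NormedSpace ℝ F] [NormedSpace ℝ G]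

theorem bilin (B : E →L[ℝ] F →L[ℝ] G) (hB : ∀ x y, ‖B x y‖ ≤ ‖x‖ * ‖y‖)
    {f : Bool → Bool → E} {g : Bool → Bool → F}
    (hf : SqBound κ a b f) (hg : SqBound κ' a b g) (ha : 0 ≤ a) (hb : 0 ≤ b) :
    SqBound (4 * (κ * κ')) a b (fun i j => B (f i j) (g i j)) := by
  have key : ∀ {x : E} {y : F} {p q : ℝ}, ‖x‖ ≤ p → ‖y‖ ≤ q → ‖B x y‖ ≤ p * q := by
    intro x y p q hx hy
    exact (hB x y).trans (mul_le_mul hx hy (norm_nonneg _) ((norm_nonneg _).trans hx))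
  have h0 := hf.nonneg
  have h1 := hg.nonneg
  refine ⟨fun i j => (key (hf.bd i j) (hg.bd i j)).trans ?_, fun j => ?_, fun i => ?_, ?_⟩
  · nlinarith [mul_nonneg h0 h1]
  · have e : B (f true j) (g true j) - B (f false j) (g false j)
        = B (f true j - f false j) (g true j) + B (f false j) (g true j - g false j) := by
      simp
    rw [e]
    refine (norm_add_le_of_le (key (hf.fst j) (hg.bd _ _)) (key (hf.bd _ _) (hg.fst j))).trans ?_
    nlinarith [mul_nonneg (mul_nonneg h0 h1) ha]
  · have e : B (f i true) (g i true) - B (f i false) (g i false)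
        = B (f i true - f i false) (g i true) + B (f i false) (g i true - g i false) := by
      simp
    rw [e]
    refine (norm_add_le_of_le (key (hf.snd i) (hg.bd _ _)) (key (hf.bd _ _) (hg.snd i))).trans ?_
    nlinarith [mul_nonneg (mul_nonneg h0 h1) hb]
  · have e : B (f true true) (g true true) - B (f true false) (g true false)
          - B (f false true) (g false true) + B (f false false) (g false false)
        = B (f true true - f true false - f false true + f false false) (g true true)
          + B (f true false - f false false) (g true true - g true false)
          + B (f false true - f false false) (g true true - g false true)
          + B (f false false) (g true true - g true false - g false true + g false false) := by
      simp only [map_sub, map_add, add_apply, sub_apply]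
      abel
    rw [e]
    refine (norm_add_le_of_le (norm_add_le_of_le (norm_add_le_of_le
      (key hf.mixed (hg.bd _ _)) (key (hf.fst _) (hg.snd _)))
      (key (hf.snd _) (hg.fst _))) (key (hf.bd _ _) hg.mixed)).trans (le_of_eq ?_)
    ring

theorem mul {f g : Bool → Bool → ℝ} (hf : SqBound κ a b f) (hg : SqBound κ' a b g)
    (ha : 0 ≤ a) (hb : 0 ≤ b) :
    SqBound (4 * (κ * κ')) a b (fun i j => f i j * g i j) :=
  bilin (ContinuousLinearMap.mul ℝ ℝ) (fun x y => by simp) hf hg ha hb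

theorem inner {E : Type*} [NormedAddCommGroup E] [InnerProductSpace ℝ E]
    {f g : Bool → Bool → E} (hf : SqBound κ a b f) (hg : SqBound κ' a b g)
    (ha : 0 ≤ a) (hb : 0 ≤ b) :
    SqBound (4 * (κ * κ')) a b (fun i j => ⟪f i j, g i j⟫) :=
  bilin (innerSL ℝ) (fun x y => norm_inner_le_norm (𝕜 := ℝ) x y) hf hg ha hb

theorem const_mul {f : Bool → Bool → ℝ} (c : ℝ) (hf : SqBound κ a b f) :
    SqBound (|c| * κ) a b (fun i j => c * f i j) where
  bd i j := by
    rw [norm_mul, Real.norm_eq_abs c]; exact mul_le_mul_of_nonneg_left (hf.bd i j) (abs_nonneg c)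
  fst j := by
    rw [← mul_sub, norm_mul, Real.norm_eq_abs c, mul_assoc]
    exact mul_le_mul_of_nonneg_left (hf.fst j) (abs_nonneg c)
  snd j := by
    rw [← mul_sub, norm_mul, Real.norm_eq_abs c, mul_assoc]
    exact mul_le_mul_of_nonneg_left (hf.snd j) (abs_nonneg c)
  mixed := by
    rw [← mul_sub, ← mul_sub, ← mul_add, norm_mul, Real.norm_eq_abs c, mul_assoc, mul_assoc,
      ← mul_assoc κ]
    exact mul_le_mul_of_nonneg_left hf.mixed (abs_nonneg c)

theorem integral {X : Type*} [MeasurableSpace X] {μ : Measure X} {f : Bool → Bool → X → E}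
    {κ : X → ℝ} (hf : ∀ i j, Integrable (f i j) μ) (hκ : Integrable κ μ)
    (h : ∀ᵐ x ∂μ, SqBound (κ x) a b (fun i j => f i j x)) :
    SqBound (∫ x, κ x ∂μ) a b (fun i j => ∫ x, f i j x ∂μ) where
  bd i j := norm_integral_le_of_norm_le hκ (h.mono fun x hx => hx.bd i j)
  fst j := by
    rw [← integral_sub (hf _ _) (hf _ _), ← integral_mul_const]
    exact norm_integral_le_of_norm_le (hκ.mul_const _) (h.mono fun x hx => hx.fst j)
  snd j := by
    rw [← integral_sub (hf _ _) (hf _ _), ← integral_mul_const]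
    exact norm_integral_le_of_norm_le (hκ.mul_const _) (h.mono fun x hx => hx.snd j)
  mixed := by
    have h1 := (hf true true).sub (hf true false)
    have h2 := h1.sub (hf false true)
    have h3 : ∫ x, (f true true - f true false - f false true + f false false) x ∂μ
        = ∫ x, f true true x ∂μ - ∫ x, f true false x ∂μ - ∫ x, f false true x ∂μ
          + ∫ x, f false false x ∂μ := by
      rw [integral_add' h2 (hf _ _), integral_sub' h1 (hf _ _), integral_sub' (hf _ _) (hf _ _)]
    rw [← h3, ← integral_mul_const, ← integral_mul_const]
    exact norm_integral_le_of_norm_le ((hκ.mul_const _).mul_const _)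
      (h.mono fun x hx => hx.mixed)

theorem intervalIntegral_unit {f : Bool → Bool → ℝ → E} {κ : ℝ → ℝ}
    (hf : ∀ i j, Continuous (f i j)) (hκ : Continuous κ)
    (h : ∀ x ∈ Icc (0:ℝ) 1, SqBound (κ x) a b (fun i j => f i j x)) :
    SqBound (∫ x in (0:ℝ)..1, κ x) a b (fun i j => ∫ x in (0:ℝ)..1, f i j x) := by
  simp only [intervalIntegral.integral_of_le (zero_le_one' ℝ)]
  refine integral (fun i j => ((hf i j).intervalIntegrable 0 1).1)
    (hκ.intervalIntegrable 0 1).1 ?_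
  exact (ae_restrict_iff' measurableSet_Ioc).2 (ae_of_all _ fun x hx => h x (Ioc_subset_Icc_self hx))

theorem comp {g g' g'' : ℝ → ℝ} {s : Set ℝ} (hs : Convex ℝ s) {C : ℝ}
    (hg : ∀ x ∈ s, HasDerivAt g (g' x) x) (hg' : ∀ x ∈ s, HasDerivAt g' (g'' x) x)
    (h0 : ∀ x ∈ s, |g x| ≤ C) (h1 : ∀ x ∈ s, |g' x| ≤ C) (h2 : ∀ x ∈ s, |g'' x| ≤ C)
    {f : Bool → Bool → ℝ} (hf : SqBound κ a b f) (hfs : ∀ i j, f i j ∈ s)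
    (ha : 0 ≤ a) (hb : 0 ≤ b) :
    SqBound (C * (1 + κ) ^ 2) a b (fun i j => g (f i j)) := by
  have hκ := hf.nonneg
  have hC : 0 ≤ C := (abs_nonneg _).trans (h0 _ (hfs true true))
  have lip : ∀ x ∈ s, ∀ y ∈ s, |g y - g x| ≤ C * |y - x| := fun x hx y hy =>
    hs.norm_image_sub_le_of_norm_hasDerivWithin_le
      (fun z hz => (hg z hz).hasDerivWithinAt) h1 hx hy
  have lip' : ∀ x ∈ s, ∀ y ∈ s, |g' y - g' x| ≤ C * |y - x| := fun x hx y hy =>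
    hs.norm_image_sub_le_of_norm_hasDerivWithin_le
      (fun z hz => (hg' z hz).hasDerivWithinAt) h2 hx hy
  refine ⟨fun i j => (h0 _ (hfs i j)).trans ?_, fun j => (lip _ (hfs _ _) _ (hfs _ _)).trans ?_,
    fun j => (lip _ (hfs _ _) _ (hfs _ _)).trans ?_, ?_⟩
  · nlinarith [mul_nonneg hC hκ, mul_nonneg hC (sq_nonneg κ)]
  · have := hf.fst j
    rw [Real.norm_eq_abs] at this
    calc _ ≤ C * (κ * a) := by gcongr
      _ ≤ C * ((1 + κ) ^ 2 * a) := by gcongr; nlinarith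
      _ = _ := by ring
  · have := hf.snd j
    rw [Real.norm_eq_abs] at this
    calc _ ≤ C * (κ * b) := by gcongr
      _ ≤ C * ((1 + κ) ^ 2 * b) := by gcongr; nlinarith
      _ = _ := by ring
  · set p := f true false
    set q := f true true
    set r := f false false
    set t := f false true
    have mem : ∀ {x y : ℝ}, x ∈ s → y ∈ s → ∀ θ ∈ Icc (0:ℝ) 1, x + θ * (y - x) ∈ s := by
      intro x y hx hy θ hθ
      have := hs hx hy (sub_nonneg.2 hθ.2) hθ.1 (by ring)
      simp only [smul_eq_mul] at this
      convert this using 1; ring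
    have hp : p ∈ s := hfs _ _
    have hq : q ∈ s := hfs _ _
    have hr : r ∈ s := hfs _ _
    have ht : t ∈ s := hfs _ _
    have hder : ∀ {x y : ℝ}, x ∈ s → y ∈ s → ∀ θ ∈ Icc (0:ℝ) 1,
        HasDerivAt (fun θ => g (x + θ * (y - x))) (g' (x + θ * (y - x)) * (y - x)) θ := by
      intro x y hx hy θ hθ
      have h := (hg _ (mem hx hy θ hθ))
      have h2 : HasDerivAt (fun θ : ℝ => x + θ * (y - x)) (y - x) θ := by
        simpa using ((hasDerivAt_id θ).mul_const (y - x)).const_add x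
      exact h.comp θ h2
    have bound : ∀ θ ∈ Icc (0:ℝ) 1,
        ‖g' (p + θ * (q - p)) * (q - p) - g' (r + θ * (t - r)) * (t - r)‖ ≤
          C * (1 + κ) ^ 2 * a * b := by
      intro θ hθ
      have e : g' (p + θ * (q - p)) * (q - p) - g' (r + θ * (t - r)) * (t - r)
        = g' (p + θ * (q - p)) * (q - p - t + r)
          + (g' (p + θ * (q - p)) - g' (r + θ * (t - r))) * (t - r) := by ring
      have m1 : |q - p - t + r| ≤ κ * a * b := hf.mixed
      have m2 : |t - r| ≤ κ * b := hf.snd false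
      have m3 : |p - r| ≤ κ * a := hf.fst false
      have m4 : |q - t| ≤ κ * a := hf.fst true
      have m5 : |p + θ * (q - p) - (r + θ * (t - r))| ≤ κ * a := by
        have e : p + θ * (q - p) - (r + θ * (t - r)) = (1 - θ) * (p - r) + θ * (q - t) := by ring
        rw [e]
        refine (abs_add_le _ _).trans ?_
        rw [abs_mul, abs_mul, abs_of_nonneg hθ.1, abs_of_nonneg (sub_nonneg.2 hθ.2)]
        nlinarith [mul_le_mul_of_nonneg_left m3 (sub_nonneg.2 hθ.2),
          mul_le_mul_of_nonneg_left m4 hθ.1]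
      rw [e]
      refine (norm_add_le _ _).trans ?_
      simp only [norm_mul, Real.norm_eq_abs]
      have hpm := mem hp hq θ hθ
      have hrm := mem hr ht θ hθ
      calc _ ≤ C * (κ * a * b) + C * (κ * a) * (κ * b) := by
            gcongr
            · exact h1 _ hpm
            · exact (lip' _ hrm _ hpm).trans (by gcongr)
        _ = C * (κ + κ ^ 2) * a * b := by ring
        _ ≤ _ := by gcongr; nlinarith
    have := (convex_Icc (0:ℝ) 1).norm_image_sub_le_of_norm_hasDerivWithin_le
      (f := fun θ => g (p + θ * (q - p)) - g (r + θ * (t - r)))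
      (fun θ hθ => ((hder hp hq θ hθ).sub (hder hr ht θ hθ)).hasDerivWithinAt) bound
      (left_mem_Icc.2 zero_le_one) (right_mem_Icc.2 zero_le_one)
    simp only [one_mul, zero_mul, add_zero, add_sub_cancel, sub_zero, norm_one, mul_one] at this
    convert this using 2; ring

/-- Powers of quantities that stay in a compact part of `(0, ∞)`. -/
theorem rpow (p : ℝ) {m : ℝ} (hm : 0 < m) (M κ : ℝ) : ∃ C, 0 ≤ C ∧ ∀ (a b : ℝ)
    (f : Bool → Bool → ℝ), 0 ≤ a → 0 ≤ b → SqBound κ a b f → (∀ i j, f i j ∈ Icc m M) →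
    SqBound C a b (fun i j => f i j ^ p) := by
  have hbd : ∀ q : ℝ, ∃ C, ∀ x ∈ Icc m M, |x ^ q| ≤ C := by
    intro q
    obtain ⟨C, hC⟩ := (isCompact_Icc (a := m) (b := M)).exists_bound_of_continuousOn
      (f := fun x : ℝ => x ^ q)
      (fun x hx => (Real.continuousAt_rpow_const x q (Or.inl (hm.trans_le hx.1).ne')).continuousWithinAt)
    exact ⟨C, hC⟩
  obtain ⟨C0, h0⟩ := hbd p
  obtain ⟨C1, h1⟩ := hbd (p - 1)
  obtain ⟨C2, h2⟩ := hbd (p - 1 - 1)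
  set C := max (max |C0| (|p| * |C1|)) (|p| * |p - 1| * |C2|) with hC
  refine ⟨C * (1 + κ) ^ 2, by positivity, fun a b f ha hb hf hmem => ?_⟩
  have pos : ∀ x ∈ Icc m M, x ≠ 0 := fun x hx => (hm.trans_le hx.1).ne'
  refine comp (s := Icc m M) (g := fun x => x ^ p) (g' := fun x => p * x ^ (p - 1))
    (g'' := fun x => p * ((p - 1) * x ^ (p - 1 - 1))) (convex_Icc m M)
    (fun x hx => Real.hasDerivAt_rpow_const (Or.inl (pos x hx)))
    (fun x hx => (Real.hasDerivAt_rpow_const (Or.inl (pos x hx))).const_mul p)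
    ?_ ?_ ?_ hf hmem ha hb
  · intro x hx
    exact ((h0 x hx).trans (le_abs_self _)).trans ((le_max_left _ _).trans (le_max_left _ _))
  · intro x hx
    rw [abs_mul]
    exact (mul_le_mul_of_nonneg_left ((h1 x hx).trans (le_abs_self _)) (abs_nonneg p)).trans
      ((le_max_right _ _).trans (le_max_left _ _))
  · intro x hx
    rw [abs_mul, abs_mul, ← mul_assoc]
    exact (mul_le_mul_of_nonneg_left ((h2 x hx).trans (le_abs_self _)) (by positivity)).trans
      (le_max_right _ _)

/-- Differences of powers inherit the smallness of the difference of the bases. -/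
theorem rpow_sub (p : ℝ) {m : ℝ} (hm : 0 < m) (M κ : ℝ) : ∃ C, 0 ≤ C ∧ ∀ (a b δ : ℝ)
    (f g : Bool → Bool → ℝ), 0 ≤ a → 0 ≤ b → SqBound κ a b f → SqBound κ a b g →
    SqBound δ a b (fun i j => f i j - g i j) →
    (∀ i j, f i j ∈ Icc m M) → (∀ i j, g i j ∈ Icc m M) →
    SqBound (C * δ) a b (fun i j => f i j ^ p - g i j ^ p) := by
  obtain ⟨C, hC, h⟩ := rpow (p - 1) hm M (κ + (κ + κ))
  refine ⟨|p| * (4 * C), by positivity, fun a b δ f g ha hb hf hg hfg hfm hgm => ?_⟩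
  have hκ := hf.nonneg
  have mem : ∀ i j, ∀ θ ∈ Icc (0:ℝ) 1, g i j + θ * (f i j - g i j) ∈ Icc m M := by
    intro i j θ hθ
    have := convex_Icc m M (hgm i j) (hfm i j) (sub_nonneg.2 hθ.2) hθ.1 (by ring)
    simp only [smul_eq_mul] at this
    convert this using 1; ring
  have ftc : ∀ i j, f i j ^ p - g i j ^ p = ∫ θ in (0:ℝ)..1,
      p * ((f i j - g i j) * (max m (g i j + θ * (f i j - g i j))) ^ (p - 1)) := by
    intro i j
    have hcong : ∀ θ ∈ uIcc (0:ℝ) 1,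
        HasDerivAt (fun θ => (g i j + θ * (f i j - g i j)) ^ p)
        (p * ((f i j - g i j) * (max m (g i j + θ * (f i j - g i j))) ^ (p - 1))) θ := by
      intro θ hθ
      rw [uIcc_of_le zero_le_one] at hθ
      have hm' := mem i j θ hθ
      have h2 : HasDerivAt (fun θ : ℝ => g i j + θ * (f i j - g i j)) (f i j - g i j) θ := by
        simpa using ((hasDerivAt_id θ).mul_const (f i j - g i j)).const_add (g i j)
      convert h2.rpow_const (p := p) (Or.inl (hm.trans_le hm'.1).ne') using 1
      rw [max_eq_right hm'.1]; ring
    rw [intervalIntegral.integral_eq_sub_of_hasDerivAt hcong]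
    · simp
    · apply Continuous.intervalIntegrable
      refine continuous_const.mul (continuous_const.mul (Continuous.rpow_const (by fun_prop) ?_))
      intro x; exact Or.inl (lt_max_of_lt_left hm).ne'
  simp only [ftc]
  have := intervalIntegral_unit (a := a) (b := b) (κ := fun _ => |p| * (4 * (δ * C)))
    (f := fun i j θ => p * ((f i j - g i j) * (max m (g i j + θ * (f i j - g i j))) ^ (p - 1)))
    (fun i j => continuous_const.mul (continuous_const.mul (Continuous.rpow_const (by fun_prop)
      (fun x => Or.inl (lt_max_of_lt_left hm).ne')))) continuous_const ?_
  · simp only [intervalIntegral.integral_const, sub_zero, one_smul] at this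
    convert this using 1; ring
  · intro θ hθ
    refine const_mul p (hfg.mul ?_ ha hb)
    have hS : SqBound (κ + (κ + κ)) a b (fun i j => g i j + θ * (f i j - g i j)) := by
      refine hg.add (((hf.sub hg).const_mul θ).mono ?_ ha hb)
      rw [abs_of_nonneg hθ.1]
      nlinarith [hθ.2]
    have := h a b _ ha hb hS (fun i j => mem i j θ hθ)
    convert this using 4 with i j
    exact max_eq_right (mem i j θ hθ).1

end SqBound

end SqBound

/-! ### The chord-arc defect of a segment -/

section Segment

variable {E : Type*} [NormedAddCommGroup E] [InnerProductSpace ℝ E]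

theorem sq_integral_unit_le {d : ℝ → ℝ} (hd : Continuous d) :
    (∫ s in (0:ℝ)..1, d s) * (∫ s in (0:ℝ)..1, d s) ≤ ∫ s in (0:ℝ)..1, d s * d s := by
  set τ := ∫ s in (0:ℝ)..1, d s with hτ
  have h0 : 0 ≤ ∫ s in (0:ℝ)..1, (d s - τ) * (d s - τ) :=
    intervalIntegral.integral_nonneg zero_le_one fun s _ => mul_self_nonneg _
  have h1 : ∫ s in (0:ℝ)..1, (d s - τ) * (d s - τ)
      = (∫ s in (0:ℝ)..1, d s * d s) - 2 * τ * τ + τ * τ := by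
    have : ∀ s, (d s - τ) * (d s - τ) = d s * d s - 2 * τ * d s + τ * τ := fun s => by ring
    simp only [this]
    rw [intervalIntegral.integral_add, intervalIntegral.integral_sub,
      intervalIntegral.integral_const_mul]
    · simp [← hτ]
    all_goals exact Continuous.intervalIntegrable (by fun_prop) _ _
  linarith

theorem inner_integral_sub_sq_integral_norm [CompleteSpace E] {v : ℝ → E} (hv : Continuous v) :
    ⟪∫ s in (0:ℝ)..1, v s, ∫ s in (0:ℝ)..1, v s⟫
        - (∫ s in (0:ℝ)..1, ‖v s‖) * (∫ s in (0:ℝ)..1, ‖v s‖)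
      = ⟪∫ s in (0:ℝ)..1, (v s - v 0), ∫ s in (0:ℝ)..1, (v s - v 0)⟫
        - (∫ s in (0:ℝ)..1, ⟪v s - v 0, v s - v 0⟫)
        - ((∫ s in (0:ℝ)..1, (‖v s‖ - ‖v 0‖)) * (∫ s in (0:ℝ)..1, (‖v s‖ - ‖v 0‖))
        - ∫ s in (0:ℝ)..1, (‖v s‖ - ‖v 0‖) * (‖v s‖ - ‖v 0‖)) := by
  have ii : ∀ {f : ℝ → ℝ}, Continuous f → IntervalIntegrable f volume 0 1 :=
    fun h => h.intervalIntegrable _ _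
  have h1 : ∫ s in (0:ℝ)..1, (v s - v 0) = (∫ s in (0:ℝ)..1, v s) - v 0 := by
    rw [intervalIntegral.integral_sub (hv.intervalIntegrable _ _)
      (continuous_const.intervalIntegrable _ _)]
    simp
  have h2 : ∫ s in (0:ℝ)..1, (‖v s‖ - ‖v 0‖) = (∫ s in (0:ℝ)..1, ‖v s‖) - ‖v 0‖ := by
    rw [intervalIntegral.integral_sub (ii hv.norm) (ii continuous_const)]
    simp
  have h3 : ⟪v 0, ∫ s in (0:ℝ)..1, v s⟫ = ∫ s in (0:ℝ)..1, ⟪v 0, v s⟫ :=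
    ((innerSL ℝ (v 0)).intervalIntegral_comp_comm (hv.intervalIntegrable 0 1)).symm
  have h4 : (∫ s in (0:ℝ)..1, ⟪v s - v 0, v s - v 0⟫)
      = (∫ s in (0:ℝ)..1, (‖v s‖ * ‖v s‖)) - 2 * (∫ s in (0:ℝ)..1, ⟪v 0, v s⟫)
        + ‖v 0‖ * ‖v 0‖ := by
    have : ∀ s, ⟪v s - v 0, v s - v 0⟫
        = ‖v s‖ * ‖v s‖ - 2 * ⟪v 0, v s⟫ + ‖v 0‖ * ‖v 0‖ := fun s => by
      rw [real_inner_sub_sub_self, real_inner_self_eq_norm_mul_norm,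
        real_inner_self_eq_norm_mul_norm, real_inner_comm]
    simp only [this]
    rw [intervalIntegral.integral_add, intervalIntegral.integral_sub,
      intervalIntegral.integral_const_mul]
    · simp
    all_goals exact ii (by fun_prop)
  have h5 : (∫ s in (0:ℝ)..1, (‖v s‖ - ‖v 0‖) * (‖v s‖ - ‖v 0‖))
      = (∫ s in (0:ℝ)..1, (‖v s‖ * ‖v s‖)) - 2 * ‖v 0‖ * (∫ s in (0:ℝ)..1, ‖v s‖)
        + ‖v 0‖ * ‖v 0‖ := by
    have : ∀ s, (‖v s‖ - ‖v 0‖) * (‖v s‖ - ‖v 0‖)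
        = ‖v s‖ * ‖v s‖ - 2 * ‖v 0‖ * ‖v s‖ + ‖v 0‖ * ‖v 0‖ := fun s => by ring
    simp only [this]
    rw [intervalIntegral.integral_add, intervalIntegral.integral_sub,
      intervalIntegral.integral_const_mul]
    · simp
    all_goals exact ii (by fun_prop)
  rw [h4, h5, h1, h2, ← h3, real_inner_sub_sub_self,
    real_inner_self_eq_norm_mul_norm (v 0), real_inner_comm (v 0)]
  ring

theorem norm_rpow_neg_eq (α : ℝ) (x : E) : ‖x‖ ^ (-α) = ⟪x, x⟫ ^ (-α / 2) := by
  rw [real_inner_self_eq_norm_sq, ← Real.rpow_natCast_mul (norm_nonneg _)]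
  congr 1; push_cast; ring

theorem SqBound.segment [CompleteSpace E] (α : ℝ) {c : ℝ} (hc : 0 < c) (M : ℝ) :
    ∃ C, 0 ≤ C ∧ ∀ (a b : ℝ) (v : Bool → Bool → ℝ → E) (d : ℝ → ℝ), 0 ≤ a → 0 ≤ b →
    (∀ i j, Continuous (v i j)) → Continuous d →
    (∀ s ∈ Icc (0:ℝ) 1, SqBound M a b (fun i j => v i j s)) →
    (∀ s ∈ Icc (0:ℝ) 1, SqBound (d s) a b (fun i j => v i j s - v i j 0)) →
    (∀ i j, ∀ s ∈ Icc (0:ℝ) 1, c ≤ ‖v i j s‖) →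
    (∀ i j, c ≤ ‖∫ s in (0:ℝ)..1, v i j s‖) →
    SqBound C a b (fun i j => ∫ s in (0:ℝ)..1, ‖v i j s‖) ∧
    SqBound (C * ∫ s in (0:ℝ)..1, d s * d s) a b (fun i j =>
      (‖∫ s in (0:ℝ)..1, v i j s‖ ^ (-α) - (∫ s in (0:ℝ)..1, ‖v i j s‖) ^ (-α))
        * (‖v i j 0‖ * ‖v i j 1‖)) := by
  have hc2 : 0 < c ^ 2 := by positivity
  obtain ⟨C1, hC1, H1⟩ := SqBound.rpow (1 / 2) hc2 (M ^ 2) (4 * (M * M))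
  obtain ⟨C2, hC2, H2⟩ := SqBound.rpow_sub (1 / 2) hc2 (M ^ 2) (4 * (M * M))
  obtain ⟨C3, hC3, H3⟩ := SqBound.rpow_sub (-α / 2) hc2 (M ^ 2)
    (max (4 * (M * M)) (4 * (C1 * C1)))
  set K := C2 * (8 * |M|) with hK
  have hK0 : 0 ≤ K := by positivity
  set C := 4 * ((C3 * (8 + 8 * K ^ 2)) * (4 * (C1 * C1))) with hC
  refine ⟨max C1 C, le_max_of_le_left hC1, fun a b v d ha hb hv hd hvM hvd hvc hX => ?_⟩
  have hM : 0 ≤ M := (hvM 0 (by simp)).nonneg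
  have hMabs : |M| = M := abs_of_nonneg hM
  have hz : ∀ s ∈ Icc (0:ℝ) 1, SqBound (4 * (M * M)) a b (fun i j => ⟪v i j s, v i j s⟫) :=
    fun s hs => (hvM s hs).inner (hvM s hs) ha hb
  have hzm : ∀ s ∈ Icc (0:ℝ) 1, ∀ i j, ⟪v i j s, v i j s⟫ ∈ Icc (c ^ 2) (M ^ 2) := by
    intro s hs i j
    rw [real_inner_self_eq_norm_sq]
    exact ⟨pow_le_pow_left₀ hc.le (hvc i j s hs) 2,
      pow_le_pow_left₀ (norm_nonneg _) ((hvM s hs).bd i j) 2⟩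
  have hsqrt : ∀ x : E, ⟪x, x⟫ ^ (1 / 2 : ℝ) = ‖x‖ := fun x => by
    rw [← Real.sqrt_eq_rpow, real_inner_self_eq_norm_sq, Real.sqrt_sq (norm_nonneg _)]
  have hN : ∀ s ∈ Icc (0:ℝ) 1, SqBound C1 a b (fun i j => ‖v i j s‖) := by
    intro s hs
    have := H1 a b _ ha hb (hz s hs) (hzm s hs)
    simpa only [hsqrt] using this
  have h00 : (0:ℝ) ∈ Icc (0:ℝ) 1 := by simp
  have h11 : (1:ℝ) ∈ Icc (0:ℝ) 1 := by simp
  have hd0 : ∀ s ∈ Icc (0:ℝ) 1, 0 ≤ d s := fun s hs => (hvd s hs).nonneg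
  have he : ∀ s ∈ Icc (0:ℝ) 1, SqBound (K * d s) a b (fun i j => ‖v i j s‖ - ‖v i j 0‖) := by
    intro s hs
    have hdiff : SqBound (8 * M * d s) a b
        (fun i j => ⟪v i j s, v i j s⟫ - ⟪v i j 0, v i j 0⟫) := by
      have := ((hvd s hs).inner (hvM s hs) ha hb).add ((hvM 0 h00).inner (hvd s hs) ha hb)
      convert this using 3 with i j
      · ring
      · rw [inner_sub_left, inner_sub_right]; ring
    have := H2 a b _ _ _ ha hb (hz s hs) (hz 0 h00) hdiff (hzm s hs) (hzm 0 h00)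
    simp only [hsqrt] at this
    convert this using 1
    rw [hK, hMabs]; ring
  have hA : SqBound C1 a b (fun i j => ∫ s in (0:ℝ)..1, ‖v i j s‖) := by
    simpa using SqBound.intervalIntegral_unit (κ := fun _ => C1) (fun i j => (hv i j).norm)
      continuous_const hN
  have hXM : SqBound M a b (fun i j => ∫ s in (0:ℝ)..1, v i j s) := by
    simpa using SqBound.intervalIntegral_unit (κ := fun _ => M) hv continuous_const hvM
  refine ⟨hA.mono (le_max_left _ _) ha hb, ?_⟩
  have hXA : ∀ i j, ‖∫ s in (0:ℝ)..1, v i j s‖ ≤ ∫ s in (0:ℝ)..1, ‖v i j s‖ := fun i j =>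
    intervalIntegral.norm_integral_le_integral_norm zero_le_one
  have hAM : ∀ i j, ∫ s in (0:ℝ)..1, ‖v i j s‖ ≤ M := fun i j => by
    have := intervalIntegral.integral_mono_on (μ := volume) zero_le_one
      ((hv i j).norm.intervalIntegrable 0 1)
      (continuous_const.intervalIntegrable 0 1) (fun s hs => (hvM s hs).bd i j)
    simpa using this
  have hI : 0 ≤ ∫ s in (0:ℝ)..1, d s * d s :=
    intervalIntegral.integral_nonneg zero_le_one fun s _ => mul_self_nonneg _
  have hB : SqBound ((8 + 8 * K ^ 2) * ∫ s in (0:ℝ)..1, d s * d s) a b (fun i j =>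
      ⟪∫ s in (0:ℝ)..1, v i j s, ∫ s in (0:ℝ)..1, v i j s⟫
        - (∫ s in (0:ℝ)..1, ‖v i j s‖) * (∫ s in (0:ℝ)..1, ‖v i j s‖)) := by
    simp only [inner_integral_sub_sq_integral_norm (hv _ _)]
    have i1 : SqBound (∫ s in (0:ℝ)..1, d s) a b
        (fun i j => ∫ s in (0:ℝ)..1, (v i j s - v i j 0)) :=
      SqBound.intervalIntegral_unit (fun i j => by fun_prop) hd hvd
    have i2 : SqBound (∫ s in (0:ℝ)..1, 4 * (d s * d s)) a b
        (fun i j => ∫ s in (0:ℝ)..1, ⟪v i j s - v i j 0, v i j s - v i j 0⟫) :=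
      SqBound.intervalIntegral_unit (fun i j => by fun_prop) (by fun_prop)
        (fun s hs => (hvd s hs).inner (hvd s hs) ha hb)
    have i3 : SqBound (∫ s in (0:ℝ)..1, K * d s) a b
        (fun i j => ∫ s in (0:ℝ)..1, (‖v i j s‖ - ‖v i j 0‖)) :=
      SqBound.intervalIntegral_unit (fun i j => by fun_prop) (by fun_prop) he
    have i4 : SqBound (∫ s in (0:ℝ)..1, 4 * ((K * d s) * (K * d s))) a b
        (fun i j => ∫ s in (0:ℝ)..1, (‖v i j s‖ - ‖v i j 0‖) * (‖v i j s‖ - ‖v i j 0‖)) :=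
      SqBound.intervalIntegral_unit (fun i j => by fun_prop) (by fun_prop)
        (fun s hs => (he s hs).mul (he s hs) ha hb)
    refine (((i1.inner i1 ha hb).sub i2).sub ((i3.mul i3 ha hb).sub i4)).mono ?_ ha hb
    have e4 : ∀ s, 4 * ((K * d s) * (K * d s)) = 4 * K ^ 2 * (d s * d s) := fun s => by ring
    simp only [e4, intervalIntegral.integral_const_mul]
    have := sq_integral_unit_le hd
    nlinarith [mul_le_mul_of_nonneg_left this (sq_nonneg K)]
  have hpow := H3 a b _ _ _ ha hb ((hXM.inner hXM ha hb).mono (le_max_left _ _) ha hb)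
    ((hA.mul hA ha hb).mono (le_max_right _ _) ha hb) hB
    (fun i j => by
      rw [real_inner_self_eq_norm_sq]
      exact ⟨pow_le_pow_left₀ hc.le (hX i j) 2,
        pow_le_pow_left₀ (norm_nonneg _) ((hXA i j).trans (hAM i j)) 2⟩)
    (fun i j => by
      rw [← pow_two]
      have h := (hX i j).trans (hXA i j)
      exact ⟨pow_le_pow_left₀ hc.le h 2, pow_le_pow_left₀ (hc.le.trans h) (hAM i j) 2⟩)
  have hfin := hpow.mul ((hN 0 h00).mul (hN 1 h11) ha hb) ha hb
  have hle : 4 * (C3 * ((8 + 8 * K ^ 2) * ∫ s in (0:ℝ)..1, d s * d s) * (4 * (C1 * C1)))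
      ≤ max C1 C * ∫ s in (0:ℝ)..1, d s * d s := by
    refine le_trans (le_of_eq ?_) (mul_le_mul_of_nonneg_right (le_max_right C1 C) hI)
    rw [hC]; ring
  have h := hfin.mono hle ha hb
  convert h using 5 with i j
  · exact norm_rpow_neg_eq α _
  · have hA0 : 0 ≤ ∫ s in (0:ℝ)..1, ‖v i j s‖ := (norm_nonneg _).trans (hXA i j)
    rw [← pow_two, ← Real.rpow_natCast_mul hA0]
    congr 1; push_cast; ring

end Segment

/-! ### Differentiability from second differences -/

section SecondDifference

variable {V : Type*} [AddCommGroup V] [Module ℝ V]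

/-- The dyadic difference quotient of `E` at `γ` in direction `h`. -/
def dyadicQuot (E : V → ℝ) (γ h : V) (m : ℕ) : ℝ :=
  2 ^ m * (E (γ + ((2:ℝ) ^ m)⁻¹ • h) - E γ)

/-- The limit of the dyadic difference quotients. -/
def dyadicDeriv (E : V → ℝ) (γ h : V) : ℝ := limUnder atTop (dyadicQuot E γ h)

/-- Near `γ`, the first and second differences of `E` based at `γ` are bounded by `C`. -/
structure DiffBound (S : Submodule ℝ V) (N : V → ℝ) (E : V → ℝ) (γ : V) (r C : ℝ) : Prop where
  pos : 0 < r
  nonneg : 0 ≤ C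
  fst : ∀ h ∈ S, N h < r → |E (γ + h) - E γ| ≤ C * N h
  snd : ∀ h ∈ S, ∀ k ∈ S, N h < r → N k < r →
    |E (γ + h + k) - E (γ + h) - E (γ + k) + E γ| ≤ C * (N h * N k)

variable {S : Submodule ℝ V} {N : V → ℝ} {E : V → ℝ} {γ : V} {r C : ℝ}

theorem norm_dyadic (hNs : ∀ (c : ℝ), ∀ h ∈ S, N (c • h) = |c| * N h) {h : V} (hh : h ∈ S)
    (m : ℕ) : N (((2:ℝ) ^ m)⁻¹ • h) = ((2:ℝ) ^ m)⁻¹ * N h := by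
  rw [hNs _ h hh, abs_of_nonneg (by positivity)]

theorem eventually_norm_dyadic_lt (hNs : ∀ (c : ℝ), ∀ h ∈ S, N (c • h) = |c| * N h) (hr : 0 < r)
    {h : V} (hh : h ∈ S) : ∀ᶠ m : ℕ in atTop, N (((2:ℝ) ^ m)⁻¹ • h) < r := by
  have : Tendsto (fun m : ℕ => ((2:ℝ) ^ m)⁻¹ * N h) atTop (𝓝 (0 * N h)) := by
    refine Tendsto.mul_const _ ?_
    simp only [← inv_pow]
    exact tendsto_pow_atTop_nhds_zero_of_lt_one (by norm_num) (by norm_num)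
  rw [zero_mul] at this
  filter_upwards [this.eventually (gt_mem_nhds hr)] with m hm
  rwa [norm_dyadic hNs hh]

theorem DiffBound.tendsto_of_lt (hE : DiffBound S N E γ r C)
    (hNs : ∀ (c : ℝ), ∀ h ∈ S, N (c • h) = |c| * N h) (hN0 : ∀ h ∈ S, 0 ≤ N h)
    {h : V} (hh : h ∈ S) (hr : N h < r) :
    ∃ D, Tendsto (dyadicQuot E γ h) atTop (𝓝 D) ∧ |E (γ + h) - E γ - D| ≤ C * N h ^ 2 := by
  have hC := hE.nonneg
  have hN := hN0 h hh
  have step : ∀ m, dist (dyadicQuot E γ h m) (dyadicQuot E γ h (m + 1))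
      ≤ (C * N h ^ 2) / 2 / 2 ^ m := by
    intro m
    set x := ((2:ℝ) ^ (m + 1))⁻¹ • h with hx
    have hxS : x ∈ S := S.smul_mem _ hh
    have hxN : N x = ((2:ℝ) ^ (m + 1))⁻¹ * N h := norm_dyadic hNs hh _
    have hxr : N x < r := by
      rw [hxN]
      refine lt_of_le_of_lt (mul_le_of_le_one_left hN ?_) hr
      exact inv_le_one_of_one_le₀ (one_le_pow₀ (by norm_num))
    have hxx : ((2:ℝ) ^ m)⁻¹ • h = x + x := by
      rw [hx, ← add_smul]; congr 1; rw [pow_succ]; field_simp; norm_num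
    have h2 := hE.snd x hxS x hxS hxr hxr
    rw [Real.dist_eq, dyadicQuot, dyadicQuot, hxx, ← hx, ← add_assoc]
    have e : (2:ℝ) ^ m * (E (γ + x + x) - E γ) - 2 ^ (m + 1) * (E (γ + x) - E γ)
        = 2 ^ m * (E (γ + x + x) - E (γ + x) - E (γ + x) + E γ) := by ring
    rw [e, abs_mul, abs_of_nonneg (by positivity : (0:ℝ) ≤ 2 ^ m)]
    calc _ ≤ (2:ℝ) ^ m * (C * (N x * N x)) := by gcongr
      _ = (C * N h ^ 2) / 4 / 2 ^ m := by rw [hxN, pow_succ]; field_simp; ring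
      _ ≤ _ := by gcongr; norm_num
  obtain ⟨D, hD⟩ := cauchySeq_tendsto_of_complete (cauchySeq_of_le_geometric_two step)
  refine ⟨D, hD, ?_⟩
  have := dist_le_of_le_geometric_two_of_tendsto₀ step hD
  simpa only [Real.dist_eq, dyadicQuot, pow_zero, inv_one, one_smul, one_mul] using this

theorem DiffBound.tendsto (hE : DiffBound S N E γ r C)
    (hNs : ∀ (c : ℝ), ∀ h ∈ S, N (c • h) = |c| * N h) (hN0 : ∀ h ∈ S, 0 ≤ N h)
    {h : V} (hh : h ∈ S) : Tendsto (dyadicQuot E γ h) atTop (𝓝 (dyadicDeriv E γ h)) := by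
  obtain ⟨m, hm⟩ := (eventually_norm_dyadic_lt hNs hE.pos hh).exists
  obtain ⟨D, hD, -⟩ := hE.tendsto_of_lt hNs hN0 (S.smul_mem _ hh) hm
  refine tendsto_nhds_limUnder ⟨2 ^ m * D, ?_⟩
  rw [← tendsto_add_atTop_iff_nat m]
  refine (hD.const_mul (2 ^ m)).congr fun l => ?_
  rw [dyadicQuot, dyadicQuot, smul_smul, ← mul_inv, ← pow_add, ← mul_assoc, ← pow_add, add_comm m]

theorem DiffBound.abs_dyadicDeriv_le (hE : DiffBound S N E γ r C)
    (hNs : ∀ (c : ℝ), ∀ h ∈ S, N (c • h) = |c| * N h) (hN0 : ∀ h ∈ S, 0 ≤ N h)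
    {h : V} (hh : h ∈ S) : |dyadicDeriv E γ h| ≤ C * N h := by
  refine le_of_tendsto (hE.tendsto hNs hN0 hh).abs ?_
  filter_upwards [eventually_norm_dyadic_lt hNs hE.pos hh] with m hm
  have := hE.fst _ (S.smul_mem _ hh) hm
  rw [norm_dyadic hNs hh] at this
  rw [dyadicQuot, abs_mul, abs_of_nonneg (by positivity : (0:ℝ) ≤ 2 ^ m)]
  calc _ ≤ (2:ℝ) ^ m * (C * (((2:ℝ) ^ m)⁻¹ * N h)) := by gcongr
    _ = _ := by field_simp

theorem DiffBound.dyadicDeriv_add (hE : DiffBound S N E γ r C)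
    (hNs : ∀ (c : ℝ), ∀ h ∈ S, N (c • h) = |c| * N h) (hN0 : ∀ h ∈ S, 0 ≤ N h)
    {h k : V} (hh : h ∈ S) (hk : k ∈ S) :
    dyadicDeriv E γ (h + k) = dyadicDeriv E γ h + dyadicDeriv E γ k := by
  have h1 := ((hE.tendsto hNs hN0 (S.add_mem hh hk)).sub (hE.tendsto hNs hN0 hh)).sub
    (hE.tendsto hNs hN0 hk)
  have h2 : Tendsto (fun m => dyadicQuot E γ (h + k) m - dyadicQuot E γ h m - dyadicQuot E γ k m)
      atTop (𝓝 0) := by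
    refine squeeze_zero_norm' (a := fun m : ℕ => (1 / 2 : ℝ) ^ m * (C * (N h * N k))) ?_ ?_
    · filter_upwards [eventually_norm_dyadic_lt hNs hE.pos hh,
        eventually_norm_dyadic_lt hNs hE.pos hk] with m hm hm'
      have := hE.snd _ (S.smul_mem _ hh) _ (S.smul_mem _ hk) hm hm'
      rw [norm_dyadic hNs hh, norm_dyadic hNs hk] at this
      simp only [dyadicQuot, smul_add, Real.norm_eq_abs, ← add_assoc]
      rw [← mul_sub, ← mul_sub, abs_mul, abs_of_nonneg (by positivity : (0:ℝ) ≤ 2 ^ m)]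
      calc _ = (2:ℝ) ^ m * _ := by congr 2; ring
        _ ≤ (2:ℝ) ^ m * _ := mul_le_mul_of_nonneg_left this (by positivity)
        _ = _ := by rw [one_div, inv_pow]; field_simp
    · have := (tendsto_pow_atTop_nhds_zero_of_lt_one (r := (1 / 2 : ℝ)) (by norm_num)
        (by norm_num)).mul_const (C * (N h * N k))
      simpa using this
  linarith [tendsto_nhds_unique h1 h2]

theorem DiffBound.dyadicDeriv_smul (hE : DiffBound S N E γ r C)
    (hNs : ∀ (c : ℝ), ∀ h ∈ S, N (c • h) = |c| * N h) (hN0 : ∀ h ∈ S, 0 ≤ N h)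
    (c : ℝ) {h : V} (hh : h ∈ S) : dyadicDeriv E γ (c • h) = c * dyadicDeriv E γ h := by
  let φ : ℝ →+ ℝ := AddMonoidHom.mk' (fun t => dyadicDeriv E γ (t • h)) fun s t => by
    rw [add_smul]
    exact hE.dyadicDeriv_add hNs hN0 (S.smul_mem _ hh) (S.smul_mem _ hh)
  have hφ : Continuous φ := by
    refine AddMonoidHomClass.continuous_of_bound φ (C * N h) fun t => ?_
    have := hE.abs_dyadicDeriv_le hNs hN0 (S.smul_mem t hh)
    rw [hNs _ _ hh] at this
    refine this.trans (le_of_eq ?_)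
    rw [Real.norm_eq_abs]; ring
  have := map_real_smul φ hφ c 1
  simpa [φ] using this

theorem DiffBound.abs_dyadicDeriv_sub_le (hE : DiffBound S N E γ r C) {k : V} {r' C' : ℝ}
    (hE' : DiffBound S N E (γ + k) r' C')
    (hNs : ∀ (c : ℝ), ∀ h ∈ S, N (c • h) = |c| * N h) (hN0 : ∀ h ∈ S, 0 ≤ N h)
    (hk : k ∈ S) (hkr : N k < r) {h : V} (hh : h ∈ S) :
    |dyadicDeriv E (γ + k) h - dyadicDeriv E γ h| ≤ C * N k * N h := by
  refine le_of_tendsto ((hE'.tendsto hNs hN0 hh).sub (hE.tendsto hNs hN0 hh)).abs ?_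
  filter_upwards [eventually_norm_dyadic_lt hNs hE.pos hh] with m hm
  have := hE.snd _ hk _ (S.smul_mem _ hh) hkr hm
  rw [norm_dyadic hNs hh] at this
  simp only [dyadicQuot]
  rw [← mul_sub, abs_mul, abs_of_nonneg (by positivity : (0:ℝ) ≤ 2 ^ m)]
  calc _ = (2:ℝ) ^ m * _ := by congr 2; ring
    _ ≤ (2:ℝ) ^ m * _ := mul_le_mul_of_nonneg_left this (by positivity)
    _ = _ := by field_simp

theorem DiffBound.abs_sub_dyadicDeriv_le (hE : DiffBound S N E γ r C)
    (hNs : ∀ (c : ℝ), ∀ h ∈ S, N (c • h) = |c| * N h) (hN0 : ∀ h ∈ S, 0 ≤ N h)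
    {h : V} (hh : h ∈ S) (hr : N h < r) :
    |E (γ + h) - E γ - dyadicDeriv E γ h| ≤ C * N h ^ 2 := by
  obtain ⟨D, hD, hle⟩ := hE.tendsto_of_lt hNs hN0 hh hr
  rwa [tendsto_nhds_unique (hE.tendsto hNs hN0 hh) hD]

end SecondDifference

/-! ### The space `H^{1+σ,2}` -/

section Sobolev

variable {E : Type*} [NormedAddCommGroup E]

/-- The integrand of the Gagliardo seminorm. -/
def gagliardoIntegrand (s : ℝ) (f : ℝ → E) (u w : ℝ) : ℝ≥0∞ :=
  ENNReal.ofReal (‖f (u + w) - f u‖ ^ 2 / |w| ^ (1 + 2 * s))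

theorem measurable_gagliardoIntegrand (s : ℝ) {f : ℝ → E} (hf : Continuous f) :
    Measurable (fun p : ℝ × ℝ => gagliardoIntegrand s f p.1 p.2) := by
  unfold gagliardoIntegrand
  refine ENNReal.measurable_ofReal.comp (Measurable.div ?_ ?_)
  · exact (Continuous.measurable (by fun_prop))
  · exact (continuous_abs.comp continuous_snd).measurable.pow_const _

theorem measurable_gagliardoIntegrand_right (s : ℝ) {f : ℝ → E} (hf : Continuous f) (u : ℝ) :
    Measurable (fun w => gagliardoIntegrand s f u w) := by
  unfold gagliardoIntegrand
  refine ENNReal.measurable_ofReal.comp (Measurable.div ?_ ?_)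
  · exact (Continuous.measurable (by fun_prop))
  · exact continuous_abs.measurable.pow_const _

theorem measurable_lintegral_gagliardoIntegrand (s : ℝ) {f : ℝ → E} (hf : Continuous f) :
    Measurable fun u => ∫⁻ w in Ioo (-(1:ℝ)/2) (1/2), gagliardoIntegrand s f u w :=
  (measurable_gagliardoIntegrand s hf).lintegral_prod_right'

theorem gagliardoSq_eq (s : ℝ) (f : ℝ → E) : gagliardoSq s f =
    ∫⁻ u in Ioc (0:ℝ) 1, ∫⁻ w in Ioo (-(1:ℝ)/2) (1/2), gagliardoIntegrand s f u w := rfl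

theorem gagliardoSq_add_le (s : ℝ) {f g : ℝ → E} (hf : Continuous f) (hg : Continuous g) :
    gagliardoSq s (f + g) ≤ 2 * gagliardoSq s f + 2 * gagliardoSq s g := by
  have hpt : ∀ u w, gagliardoIntegrand s (f + g) u w
      ≤ 2 * gagliardoIntegrand s f u w + 2 * gagliardoIntegrand s g u w := by
    intro u w
    have h2 : (2 : ℝ≥0∞) = ENNReal.ofReal 2 := by simp
    unfold gagliardoIntegrand
    rw [h2, ← ENNReal.ofReal_mul (by norm_num), ← ENNReal.ofReal_mul (by norm_num),
      ← ENNReal.ofReal_add (by positivity) (by positivity)]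
    refine ENNReal.ofReal_le_ofReal ?_
    rw [← mul_div_assoc, ← mul_div_assoc, ← add_div]
    gcongr
    have : (f + g) (u + w) - (f + g) u = (f (u + w) - f u) + (g (u + w) - g u) := by
      simp only [Pi.add_apply]; abel
    rw [this]
    have h := norm_add_le (f (u + w) - f u) (g (u + w) - g u)
    nlinarith [norm_nonneg (f (u + w) - f u + (g (u + w) - g u)),
      sq_nonneg (‖f (u + w) - f u‖ - ‖g (u + w) - g u‖)]
  have hin : ∀ u, ∫⁻ w in Ioo (-(1:ℝ)/2) (1/2), gagliardoIntegrand s (f + g) u w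
      ≤ 2 * (∫⁻ w in Ioo (-(1:ℝ)/2) (1/2), gagliardoIntegrand s f u w)
        + 2 * ∫⁻ w in Ioo (-(1:ℝ)/2) (1/2), gagliardoIntegrand s g u w := by
    intro u
    refine (lintegral_mono fun w => hpt u w).trans_eq ?_
    rw [lintegral_add_left ((measurable_gagliardoIntegrand_right s hf u).const_mul 2),
      lintegral_const_mul _ (measurable_gagliardoIntegrand_right s hf u),
      lintegral_const_mul _ (measurable_gagliardoIntegrand_right s hg u)]
  have h := measurable_lintegral_gagliardoIntegrand s hf
  have h' := measurable_lintegral_gagliardoIntegrand s hg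
  refine (lintegral_mono fun u => hin u).trans_eq ?_
  rw [lintegral_add_left (h.const_mul 2), lintegral_const_mul _ h, lintegral_const_mul _ h']
  rfl

theorem gagliardoSq_const_smul [NormedSpace ℝ E] (s c : ℝ) {f : ℝ → E} (hf : Continuous f) :
    gagliardoSq s (c • f) = ENNReal.ofReal (c ^ 2) * gagliardoSq s f := by
  have hpt : ∀ u w, gagliardoIntegrand s (c • f) u w
      = ENNReal.ofReal (c ^ 2) * gagliardoIntegrand s f u w := by
    intro u w
    unfold gagliardoIntegrand
    rw [← ENNReal.ofReal_mul (sq_nonneg c)]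
    simp only [Pi.smul_apply, ← smul_sub, norm_smul, mul_pow, Real.norm_eq_abs, sq_abs]
    rw [mul_div_assoc]
  rw [gagliardoSq_eq, gagliardoSq_eq, 
    ← lintegral_const_mul _ (measurable_lintegral_gagliardoIntegrand s hf)]
  refine lintegral_congr fun u => ?_
  rw [← lintegral_const_mul _ (measurable_gagliardoIntegrand_right s hf u)]
  exact lintegral_congr fun w => hpt u w

namespace MemH1

variable {σ : ℝ} {γ : ℝ → Rn n}

theorem contDeriv (h : MemH1 σ γ) : Continuous (deriv γ) := h.2.1.continuous_deriv le_rfl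

theorem differentiable (h : MemH1 σ γ) : Differentiable ℝ γ := h.2.1.differentiable one_ne_zero

theorem deriv_periodic (h : MemH1 σ γ) : Function.Periodic (deriv γ) 1 := fun u => by
  have : (fun v => γ (v + 1)) = γ := funext h.1
  conv_rhs => rw [← this]
  rw [deriv_comp_add_const]

theorem deriv_add {γ₁ γ₂ : ℝ → Rn n} (h₁ : MemH1 σ γ₁) (h₂ : MemH1 σ γ₂) :
    deriv (γ₁ + γ₂) = deriv γ₁ + deriv γ₂ :=
  funext fun u => _root_.deriv_add (h₁.differentiable u) (h₂.differentiable u)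

theorem deriv_smul (c : ℝ) (h : MemH1 σ γ) : deriv (c • γ) = c • deriv γ :=
  funext fun u => deriv_const_smul c (h.differentiable u)

theorem add {γ₁ γ₂ : ℝ → Rn n} (h₁ : MemH1 σ γ₁) (h₂ : MemH1 σ γ₂) : MemH1 σ (γ₁ + γ₂) := by
  refine ⟨h₁.1.add h₂.1, h₁.2.1.add h₂.2.1, ?_⟩
  rw [h₁.deriv_add h₂]
  refine (gagliardoSq_add_le σ h₁.contDeriv h₂.contDeriv).trans_lt ?_
  exact ENNReal.add_lt_top.2 ⟨ENNReal.mul_lt_top (by simp) h₁.2.2,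
    ENNReal.mul_lt_top (by simp) h₂.2.2⟩

theorem smul (c : ℝ) (h : MemH1 σ γ) : MemH1 σ (c • γ) := by
  refine ⟨fun u => by simp [h.1 u], h.2.1.const_smul c, ?_⟩
  rw [h.deriv_smul, gagliardoSq_const_smul _ _ h.contDeriv]
  exact ENNReal.mul_lt_top (by simp) h.2.2

theorem zero : MemH1 σ (0 : ℝ → Rn n) := by
  refine ⟨fun u => rfl, contDiff_const, ?_⟩
  have : deriv (0 : ℝ → Rn n) = fun _ => 0 := funext fun u => deriv_const u 0
  simp [this, gagliardoSq]

end MemH1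

/-- `H^{1+σ,2}(ℝ/ℤ, ℝⁿ)` as a space of functions. -/
def H1Space (n : ℕ) (σ : ℝ) : Submodule ℝ (ℝ → Rn n) where
  carrier := {γ | MemH1 σ γ}
  add_mem' := MemH1.add
  zero_mem' := MemH1.zero
  smul_mem' := fun c _ h => MemH1.smul c h

theorem H1Norm_nonneg (σ : ℝ) (γ : ℝ → Rn n) : 0 ≤ H1Norm σ γ := by
  unfold H1Norm; positivity

theorem H1Norm_smul {σ : ℝ} (c : ℝ) {γ : ℝ → Rn n} (h : MemH1 σ γ) :
    H1Norm σ (c • γ) = |c| * H1Norm σ γ := by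
  unfold H1Norm
  rw [h.deriv_smul, gagliardoSq_const_smul _ _ h.contDeriv, ENNReal.toReal_mul,
    ENNReal.toReal_ofReal (sq_nonneg c), Real.sqrt_mul (sq_nonneg c), Real.sqrt_sq_eq_abs]
  simp only [Pi.smul_apply, norm_smul, mul_pow, Real.norm_eq_abs, sq_abs, ← mul_add]
  rw [integral_const_mul, Real.sqrt_mul (sq_nonneg c), Real.sqrt_sq_eq_abs, mul_add]

theorem gagliardoSq_toReal_le_H1Norm_sq (σ : ℝ) (γ : ℝ → Rn n) :
    (gagliardoSq σ (deriv γ)).toReal ≤ H1Norm σ γ ^ 2 := by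
  rw [← Real.sqrt_le_left (H1Norm_nonneg _ _)]
  exact le_add_of_nonneg_left (Real.sqrt_nonneg _)

theorem integral_sq_deriv_le_H1Norm_sq {σ : ℝ} {γ : ℝ → Rn n} (h : MemH1 σ γ) :
    ∫ u in (0:ℝ)..1, ‖deriv γ u‖ ^ 2 ≤ H1Norm σ γ ^ 2 := by
  have h1 : ∫ u in (0:ℝ)..1, ‖deriv γ u‖ ^ 2
      ≤ ∫ u in (0:ℝ)..1, (‖γ u‖ ^ 2 + ‖deriv γ u‖ ^ 2) := by
    have hc := h.contDeriv
    have hd := h.2.1.continuous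
    refine intervalIntegral.integral_mono_on zero_le_one
      (Continuous.intervalIntegrable (by fun_prop) _ _)
      (Continuous.intervalIntegrable (by fun_prop) _ _) fun u _ => ?_
    nlinarith [sq_nonneg ‖γ u‖]
  refine h1.trans ?_
  rw [intervalIntegral.integral_of_le zero_le_one, ← Real.sqrt_le_left (H1Norm_nonneg _ _)]
  exact le_add_of_nonneg_right (Real.sqrt_nonneg _)

theorem setLIntegral_comp_add_mul {F : ℝ → ℝ≥0∞} (hF : Measurable F) (a : ℝ) {l : ℝ}
    (hl : l ≠ 0) {s : Set ℝ} (hs : MeasurableSet s) :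
    ∫⁻ t in (fun t => a + l * t) ⁻¹' s, F (a + l * t) = ENNReal.ofReal |l⁻¹| * ∫⁻ y in s, F y := by
  have hmap : Measure.map (fun t => a + l * t) volume = ENNReal.ofReal |l⁻¹| • volume := by
    have : (fun t => a + l * t) = (fun t => a + t) ∘ fun t => l * t := rfl
    rw [this, ← Measure.map_map (measurable_const_add a) (measurable_const_mul l),
      Real.map_volume_mul_left hl, Measure.map_smul, map_add_left_eq_self]
  rw [← setLIntegral_map hs hF (by fun_prop), hmap, Measure.restrict_smul,
    lintegral_smul_measure, smul_eq_mul]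

theorem setLIntegral_Ioc_periodic {F : ℝ → ℝ≥0∞} (hF : Function.Periodic F 1) (x : ℝ) :
    ∫⁻ y in Ioc x (x + 1), F y = ∫⁻ y in Ioc (0:ℝ) 1, F y := by
  have h1 := isAddFundamentalDomain_Ioc (zero_lt_one' ℝ) x volume
  have h0 := isAddFundamentalDomain_Ioc (zero_lt_one' ℝ) 0 volume
  rw [zero_add] at h0
  refine h1.setLIntegral_eq h0 F fun g y => ?_
  obtain ⟨g, hg⟩ := g
  obtain ⟨k, rfl⟩ := AddSubgroup.mem_zmultiples_iff.1 hg
  have := hF.zsmul k y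
  rw [← this, add_comm y]
  rfl

theorem ofReal_average_sq_le {s : ℝ} (hs : 0 ≤ 1 + 2 * s) {f : ℝ → E} (hf : Continuous f)
    (hper : Function.Periodic f 1) (x : ℝ) {l : ℝ} (hl : 0 < l) (hl2 : l ≤ 1 / 2) :
    ∫⁻ p in Ioc (0:ℝ) 1, ∫⁻ t in Ioc (0:ℝ) 1,
      ENNReal.ofReal (‖f (x + l / 2 * t) - f (x + l * p)‖ ^ 2)
      ≤ ENNReal.ofReal (2 * l ^ (1 + 2 * s - 2)) * gagliardoSq s f := by
  set F : ℝ → ℝ≥0∞ := fun y => ∫⁻ w in Ioo (-(1:ℝ)/2) (1/2), gagliardoIntegrand s f y w with hF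
  have hFm : Measurable F := measurable_lintegral_gagliardoIntegrand s hf
  have hFper : Function.Periodic F 1 := fun y => by
    simp only [hF, gagliardoIntegrand]
    refine lintegral_congr fun w => ?_
    rw [hper y, add_right_comm, hper]
  have inner : ∀ p ∈ Ioc (0:ℝ) 1, ∫⁻ t in Ioc (0:ℝ) 1,
      ENNReal.ofReal (‖f (x + l / 2 * t) - f (x + l * p)‖ ^ 2)
      ≤ ENNReal.ofReal (2 * l ^ (1 + 2 * s - 1)) * F (x + l * p) := by
    intro p hp
    set y := x + l * p with hy
    have hsub : Ioc (0:ℝ) 1 ⊆ (fun t => (x - y) + l / 2 * t) ⁻¹' Ioo (-l) l := by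
      intro t ht
      simp only [mem_preimage, mem_Ioo, hy]
      constructor <;> nlinarith [ht.1, ht.2, hp.1, hp.2, mul_le_mul_of_nonneg_left hp.2 hl.le,
        mul_le_mul_of_nonneg_left ht.2 hl.le, mul_pos hl ht.1, mul_pos hl hp.1]
    have hm : Measurable fun w => ENNReal.ofReal (‖f (y + w) - f y‖ ^ 2) :=
      ENNReal.measurable_ofReal.comp (Continuous.measurable (by fun_prop))
    calc _ = ∫⁻ t in Ioc (0:ℝ) 1,
          ENNReal.ofReal (‖f (y + ((x - y) + l / 2 * t)) - f y‖ ^ 2) := by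
          refine lintegral_congr fun t => ?_
          congr 5; ring
      _ ≤ ∫⁻ t in (fun t => (x - y) + l / 2 * t) ⁻¹' Ioo (-l) l,
          ENNReal.ofReal (‖f (y + ((x - y) + l / 2 * t)) - f y‖ ^ 2) :=
        lintegral_mono_set hsub
      _ = ENNReal.ofReal |(l / 2)⁻¹| * ∫⁻ w in Ioo (-l) l,
          ENNReal.ofReal (‖f (y + w) - f y‖ ^ 2) :=
        setLIntegral_comp_add_mul hm _ (by positivity) measurableSet_Ioo
      _ ≤ ENNReal.ofReal |(l / 2)⁻¹| * ∫⁻ w in Ioo (-l) l,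
          ENNReal.ofReal (l ^ (1 + 2 * s)) * gagliardoIntegrand s f y w := by
        refine mul_le_mul' le_rfl ?_
        refine setLIntegral_mono' measurableSet_Ioo fun w hw => ?_
        rw [gagliardoIntegrand, ← ENNReal.ofReal_mul (by positivity)]
        refine ENNReal.ofReal_le_ofReal ?_
        rcases eq_or_ne w 0 with rfl | hw0
        · simp
        · have h1 : |w| ^ (1 + 2 * s) ≤ l ^ (1 + 2 * s) :=
            Real.rpow_le_rpow (abs_nonneg _) (abs_lt.2 hw).le hs
          have h2 : 0 < |w| ^ (1 + 2 * s) := Real.rpow_pos_of_pos (abs_pos.2 hw0) _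
          rw [← mul_div_assoc, le_div_iff₀ h2, mul_comm]
          gcongr
      _ ≤ ENNReal.ofReal |(l / 2)⁻¹| * (ENNReal.ofReal (l ^ (1 + 2 * s)) * F y) := by
        rw [lintegral_const_mul _ (measurable_gagliardoIntegrand_right s hf y)]
        gcongr
        refine lintegral_mono_set (Ioo_subset_Ioo ?_ hl2)
        linarith
      _ = _ := by
        rw [← mul_assoc, ← ENNReal.ofReal_mul (abs_nonneg _), abs_of_pos (by positivity),
          Real.rpow_sub_one hl.ne']
        congr 2; field_simp
  have hsub : Ioc (0:ℝ) 1 ⊆ (fun t => x + l * t) ⁻¹' Ioc x (x + l) := by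
    intro t ht
    simp only [mem_preimage, mem_Ioc]
    constructor <;> nlinarith [ht.1, ht.2, mul_pos hl ht.1]
  calc _ ≤ ∫⁻ p in Ioc (0:ℝ) 1, ENNReal.ofReal (2 * l ^ (1 + 2 * s - 1)) * F (x + l * p) :=
        setLIntegral_mono' measurableSet_Ioc inner
    _ = ENNReal.ofReal (2 * l ^ (1 + 2 * s - 1)) * ∫⁻ p in Ioc (0:ℝ) 1, F (x + l * p) :=
        lintegral_const_mul _ (hFm.comp (by fun_prop))
    _ ≤ ENNReal.ofReal (2 * l ^ (1 + 2 * s - 1)) *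
          ∫⁻ p in (fun t => x + l * t) ⁻¹' Ioc x (x + l), F (x + l * p) := by
        refine mul_le_mul' le_rfl ?_; exact lintegral_mono_set hsub
    _ = ENNReal.ofReal (2 * l ^ (1 + 2 * s - 1)) *
          (ENNReal.ofReal |l⁻¹| * ∫⁻ y in Ioc x (x + l), F y) := by
        rw [setLIntegral_comp_add_mul hFm x hl.ne' measurableSet_Ioc]
    _ ≤ ENNReal.ofReal (2 * l ^ (1 + 2 * s - 1)) *
          (ENNReal.ofReal |l⁻¹| * ∫⁻ y in Ioc x (x + 1), F y) := by
        refine mul_le_mul' le_rfl (mul_le_mul' le_rfl ?_)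
        exact lintegral_mono_set (Ioc_subset_Ioc_right (by linarith))
    _ = _ := by
        rw [setLIntegral_Ioc_periodic hFper, ← mul_assoc, ← ENNReal.ofReal_mul (by positivity),
          abs_of_pos (by positivity), gagliardoSq_eq]
        congr 2
        have : 1 + 2 * s - 2 = 1 + 2 * s - 1 - 1 := by ring
        rw [this, Real.rpow_sub_one hl.ne' (1 + 2 * s - 1)]; field_simp

end Sobolev

section SobolevSup

variable {E : Type*} [NormedAddCommGroup E] [NormedSpace ℝ E] [CompleteSpace E]

theorem ofReal_intervalIntegral_unit {d : ℝ → ℝ} (hd : Continuous d) (h0 : ∀ t, 0 ≤ d t) :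
    ENNReal.ofReal (∫ t in (0:ℝ)..1, d t) = ∫⁻ t in Ioc (0:ℝ) 1, ENNReal.ofReal (d t) := by
  rw [intervalIntegral.integral_of_le zero_le_one]
  exact ofReal_integral_eq_lintegral_ofReal ((hd.intervalIntegrable 0 1).1)
    (Eventually.of_forall h0)

theorem norm_average_sub_average_sq_le {s : ℝ} (hs : 0 ≤ 1 + 2 * s) {f : ℝ → E}
    (hf : Continuous f) (hper : Function.Periodic f 1) (hG : gagliardoSq s f ≠ ⊤) (x : ℝ) {l : ℝ}
    (hl : 0 < l) (hl2 : l ≤ 1 / 2) :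
    ‖(∫ t in (0:ℝ)..1, f (x + l / 2 * t)) - ∫ p in (0:ℝ)..1, f (x + l * p)‖ ^ 2
      ≤ 2 * l ^ (1 + 2 * s - 2) * (gagliardoSq s f).toReal := by
  set D : ℝ → ℝ → ℝ := fun p t => ‖f (x + l / 2 * t) - f (x + l * p)‖ with hD
  have hDc : Continuous (Function.uncurry D) := by simp only [hD, Function.uncurry_def]; fun_prop
  have hDt : ∀ p, Continuous (D p) := fun p => by simp only [hD]; fun_prop
  have hD1 : Continuous fun p => ∫ t in (0:ℝ)..1, D p t :=
    intervalIntegral.continuous_parametric_intervalIntegral_of_continuous' hDc 0 1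
  have hD2 : Continuous fun p => ∫ t in (0:ℝ)..1, D p t ^ 2 :=
    intervalIntegral.continuous_parametric_intervalIntegral_of_continuous'
      (f := fun p t => D p t ^ 2) (by exact hDc.pow 2) 0 1
  have hfi : ∀ c : ℝ, IntervalIntegrable (fun t => f (x + c * t)) volume 0 1 := fun c =>
    Continuous.intervalIntegrable (by fun_prop) _ _
  have h1 : ‖(∫ t in (0:ℝ)..1, f (x + l / 2 * t)) - ∫ p in (0:ℝ)..1, f (x + l * p)‖
      ≤ ∫ p in (0:ℝ)..1, ∫ t in (0:ℝ)..1, D p t := by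
    have e1 : (∫ t in (0:ℝ)..1, f (x + l / 2 * t)) - ∫ p in (0:ℝ)..1, f (x + l * p)
        = ∫ p in (0:ℝ)..1, ((∫ t in (0:ℝ)..1, f (x + l / 2 * t)) - f (x + l * p)) := by
      rw [intervalIntegral.integral_sub (by simp) (hfi l)]; simp
    have e2 : ∀ p, (∫ t in (0:ℝ)..1, f (x + l / 2 * t)) - f (x + l * p)
        = ∫ t in (0:ℝ)..1, (f (x + l / 2 * t) - f (x + l * p)) := fun p => by
      rw [intervalIntegral.integral_sub (hfi _) (by simp)]; simp
    rw [e1]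
    refine intervalIntegral.norm_integral_le_of_norm_le zero_le_one
      (ae_of_all _ fun p _ => ?_) (hD1.intervalIntegrable _ _)
    rw [e2]
    exact intervalIntegral.norm_integral_le_integral_norm zero_le_one
  have h2 : (∫ p in (0:ℝ)..1, ∫ t in (0:ℝ)..1, D p t) ^ 2
      ≤ ∫ p in (0:ℝ)..1, ∫ t in (0:ℝ)..1, D p t ^ 2 := by
    rw [pow_two]
    refine (sq_integral_unit_le hD1).trans ?_
    refine intervalIntegral.integral_mono_on zero_le_one
      ((hD1.mul hD1).intervalIntegrable _ _) (hD2.intervalIntegrable _ _) fun p _ => ?_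
    simpa only [pow_two] using sq_integral_unit_le (hDt p)
  have h3 : ENNReal.ofReal (∫ p in (0:ℝ)..1, ∫ t in (0:ℝ)..1, D p t ^ 2)
      ≤ ENNReal.ofReal (2 * l ^ (1 + 2 * s - 2)) * gagliardoSq s f := by
    rw [ofReal_intervalIntegral_unit hD2 fun p =>
      intervalIntegral.integral_nonneg zero_le_one fun t _ => sq_nonneg _]
    refine le_trans (le_of_eq ?_) (ofReal_average_sq_le hs hf hper x hl hl2)
    exact lintegral_congr fun p =>
      ofReal_intervalIntegral_unit ((hDt p).pow 2) fun t => sq_nonneg _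
  rw [← ENNReal.ofReal_toReal hG, ← ENNReal.ofReal_mul (by positivity),
    ENNReal.ofReal_le_ofReal_iff (by positivity)] at h3
  exact (pow_le_pow_left₀ (norm_nonneg _) h1 2).trans (h2.trans h3)

theorem exists_norm_le_gagliardoSq {s : ℝ} (hs : 1 < 2 * s) : ∃ C : ℝ, 0 ≤ C ∧
    ∀ f : ℝ → E, Continuous f → Function.Periodic f 1 → gagliardoSq s f ≠ ⊤ → ∀ x,
      ‖f x‖ ≤ 2 * √(∫ u in (0:ℝ)..1, ‖f u‖ ^ 2) + C * √(gagliardoSq s f).toReal := by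
  set r : ℝ := (1 / 2 : ℝ) ^ ((2 * s - 1) / 2) with hr
  have hr0 : 0 < r := by positivity
  have hr1 : r < 1 := Real.rpow_lt_one (by norm_num) (by norm_num) (by linarith)
  refine ⟨2 / (1 - r), by have := sub_pos.2 hr1; positivity, fun f hf hper hG x => ?_⟩
  set a : ℕ → E := fun j => ∫ t in (0:ℝ)..1, f (x + (1 / 2) ^ (j + 1) * t) with ha
  set G := (gagliardoSq s f).toReal with hGdef
  have hG0 : 0 ≤ G := ENNReal.toReal_nonneg
  have hstep : ∀ j, dist (a j) (a (j + 1)) ≤ 2 * √G * r ^ j := by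
    intro j
    have hl : (0:ℝ) < (1 / 2) ^ (j + 1) := by positivity
    have h := norm_average_sub_average_sq_le (by linarith) hf hper hG x hl
      (by rw [pow_succ]; nlinarith [pow_le_one₀ (n := j) (by norm_num : (0:ℝ) ≤ 1 / 2) (by norm_num)])
    have e : (1 / 2 : ℝ) ^ (j + 1) / 2 = (1 / 2) ^ (j + 1 + 1) := by rw [pow_succ _ (j + 1)]; ring
    rw [e] at h
    have e2 : (((1 / 2 : ℝ) ^ (j + 1)) ^ (1 + 2 * s - 2)) = (r ^ (j + 1)) ^ 2 := by
      rw [hr, ← Real.rpow_natCast, ← Real.rpow_natCast, ← Real.rpow_natCast,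
        ← Real.rpow_mul (by positivity), ← Real.rpow_mul (by positivity),
        ← Real.rpow_mul (by positivity)]
      congr 1; push_cast; ring
    rw [e2] at h
    rw [dist_comm, dist_eq_norm]
    refine abs_le_of_sq_le_sq' (h.trans ?_) (by positivity) |>.2
    have h5 : r ^ (j + 1) ≤ r ^ j := pow_le_pow_of_le_one hr0.le hr1.le (Nat.le_succ j)
    have h6 : (r ^ (j + 1)) ^ 2 ≤ (r ^ j) ^ 2 := pow_le_pow_left₀ (by positivity) h5 2
    rw [mul_pow, mul_pow, Real.sq_sqrt hG0]
    nlinarith [mul_le_mul_of_nonneg_right h6 hG0, mul_nonneg hG0 (sq_nonneg (r ^ j))]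
  have hlim : Tendsto a atTop (𝓝 (f x)) := by
    have hc : Continuous fun l : ℝ => ∫ t in (0:ℝ)..1, f (x + l * t) :=
      intervalIntegral.continuous_parametric_intervalIntegral_of_continuous'
        (f := fun l t => f (x + l * t)) (by simp only [Function.uncurry_def]; fun_prop) 0 1
    have h0 : Tendsto (fun j : ℕ => (1 / 2 : ℝ) ^ (j + 1)) atTop (𝓝 0) :=
      (tendsto_pow_atTop_nhds_zero_of_lt_one (by norm_num) (by norm_num)).comp
        (tendsto_add_atTop_nat 1)
    have h1 := (hc.tendsto 0).comp h0
    have h2 : ∫ t in (0:ℝ)..1, f (x + 0 * t) = f x := by simp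
    rwa [h2] at h1
  have hdist := dist_le_of_le_geometric_of_tendsto₀ r _ hr1 hstep hlim
  have ha0 : ‖a 0‖ ≤ 2 * √(∫ u in (0:ℝ)..1, ‖f u‖ ^ 2) := by
    have hI : 0 ≤ ∫ u in (0:ℝ)..1, ‖f u‖ ^ 2 :=
      intervalIntegral.integral_nonneg zero_le_one fun _ _ => sq_nonneg _
    have h1 : ‖a 0‖ ≤ ∫ t in (0:ℝ)..1, ‖f (x + 1 / 2 * t)‖ := by
      simpa [ha] using intervalIntegral.norm_integral_le_integral_norm (μ := volume)
        (f := fun t => f (x + 1 / 2 * t)) zero_le_one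
    have h2 := sq_integral_unit_le (d := fun t => ‖f (x + 1 / 2 * t)‖) (by fun_prop)
    have h3 : ∫ t in (0:ℝ)..1, ‖f (x + 1 / 2 * t)‖ * ‖f (x + 1 / 2 * t)‖
        ≤ 2 * ∫ u in (0:ℝ)..1, ‖f u‖ ^ 2 := by
      have e := intervalIntegral.integral_comp_add_mul (a := 0) (b := 1)
        (fun y => ‖f y‖ ^ 2) (by norm_num : (1 / 2 : ℝ) ≠ 0) x
      simp only [← pow_two]
      rw [e]
      have hp : Function.Periodic (fun y => ‖f y‖ ^ 2) 1 := fun y => by simp only [hper y]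
      have e2 := hp.intervalIntegral_add_eq x 0
      rw [zero_add] at e2
      rw [← e2]
      have : ∫ y in (x + 1 / 2 * 0)..(x + 1 / 2 * 1), ‖f y‖ ^ 2 ≤ ∫ y in x..(x + 1), ‖f y‖ ^ 2 := by
        refine intervalIntegral.integral_mono_interval (by linarith) (by linarith) (by linarith)
          (ae_of_all _ fun _ => sq_nonneg _) (Continuous.intervalIntegrable (by fun_prop) _ _)
      norm_num at this ⊢
      linarith
    refine abs_le_of_sq_le_sq' ?_ (by positivity) |>.2
    rw [mul_pow, Real.sq_sqrt hI]
    have h4 := pow_le_pow_left₀ (norm_nonneg _) h1 2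
    rw [pow_two (∫ t in (0:ℝ)..1, ‖f (x + 1 / 2 * t)‖)] at h4
    linarith
  have h7 : ‖f x‖ ≤ ‖a 0‖ + dist (a 0) (f x) := by
    rw [dist_eq_norm']
    simpa using norm_add_le (a 0) (f x - a 0)
  refine h7.trans (add_le_add ha0 (hdist.trans (le_of_eq ?_)))
  ring

end SobolevSup

theorem MemH1.exists_norm_deriv_le (n : ℕ) {σ : ℝ} (hσ : 1 < 2 * σ) : ∃ C : ℝ, 1 ≤ C ∧
    ∀ h : ℝ → Rn n, MemH1 σ h → ∀ u, ‖deriv h u‖ ≤ C * H1Norm σ h := by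
  obtain ⟨C, hC, H⟩ := exists_norm_le_gagliardoSq (E := Rn n) hσ
  refine ⟨2 + C, by linarith, fun h hh u => ?_⟩
  refine (H (deriv h) hh.contDeriv hh.deriv_periodic hh.2.2.ne u).trans ?_
  have h1 : √(∫ u in (0:ℝ)..1, ‖deriv h u‖ ^ 2) ≤ H1Norm σ h := by
    rw [Real.sqrt_le_left (H1Norm_nonneg _ _)]; exact integral_sq_deriv_le_H1Norm_sq hh
  have h2 : √(gagliardoSq σ (deriv h)).toReal ≤ H1Norm σ h := by
    rw [Real.sqrt_le_left (H1Norm_nonneg _ _)]; exact gagliardoSq_toReal_le_H1Norm_sq _ _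
  nlinarith

/-! ### The weight dominating the integrand of the energy -/

section Weight

variable {E : Type*} [NormedAddCommGroup E]

/-- The mean square oscillation of `f` along the segment from `u` to `u + w`. -/
def meanSqOsc (f : ℝ → E) (p : ℝ × ℝ) : ℝ := ∫ s in (0:ℝ)..1, ‖f (p.1 + s * p.2) - f p.1‖ ^ 2

theorem continuous_meanSqOsc {f : ℝ → E} (hf : Continuous f) : Continuous (meanSqOsc f) :=
  intervalIntegral.continuous_parametric_intervalIntegral_of_continuous'
    (f := fun (p : ℝ × ℝ) s => ‖f (p.1 + s * p.2) - f p.1‖ ^ 2)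
    (by simp only [Function.uncurry_def]; fun_prop) 0 1

theorem meanSqOsc_nonneg (f : ℝ → E) (p : ℝ × ℝ) : 0 ≤ meanSqOsc f p :=
  intervalIntegral.integral_nonneg zero_le_one fun _ _ => sq_nonneg _

/-- The reference measure on `(0, 1] × (-1/2, 1/2)`. -/
def pairMeasure : Measure (ℝ × ℝ) :=
  (volume.restrict (Ioc (0:ℝ) 1)).prod (volume.restrict (Ioo (-(1:ℝ)/2) (1/2)))

instance : IsFiniteMeasure pairMeasure := by unfold pairMeasure; infer_instance

theorem lintegral_meanSqOsc_div_le {σ : ℝ} (hσ : 0 ≤ σ) {f : ℝ → E} (hf : Continuous f) (u : ℝ) :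
    ∫⁻ w in Ioo (-(1:ℝ)/2) (1/2), ENNReal.ofReal (meanSqOsc f (u, w) / |w| ^ (1 + 2 * σ))
      ≤ ∫⁻ w in Ioo (-(1:ℝ)/2) (1/2), gagliardoIntegrand σ f u w := by
  set B := ∫⁻ w in Ioo (-(1:ℝ)/2) (1/2), gagliardoIntegrand σ f u w with hB
  have h1 : ∀ w, ENNReal.ofReal (meanSqOsc f (u, w) / |w| ^ (1 + 2 * σ))
      = ∫⁻ s in Ioc (0:ℝ) 1, ENNReal.ofReal (‖f (u + s * w) - f u‖ ^ 2 / |w| ^ (1 + 2 * σ)) := by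
    intro w
    rw [meanSqOsc, ← intervalIntegral.integral_div]
    exact ofReal_intervalIntegral_unit (Continuous.div_const (by fun_prop) _)
      fun s => by positivity
  simp only [h1]
  rw [lintegral_lintegral_swap]
  · have h2 : ∀ s ∈ Ioc (0:ℝ) 1, ∫⁻ w in Ioo (-(1:ℝ)/2) (1/2),
        ENNReal.ofReal (‖f (u + s * w) - f u‖ ^ 2 / |w| ^ (1 + 2 * σ)) ≤ B := by
      intro s hs
      have hm := measurable_gagliardoIntegrand_right σ hf u
      have hsub : Ioo (-(1:ℝ)/2) (1/2) ⊆ (fun w => 0 + s * w) ⁻¹' Ioo (-(1:ℝ)/2) (1/2) := by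
        intro w hw
        simp only [mem_preimage, mem_Ioo] at hw ⊢
        constructor <;> nlinarith [hs.1, hs.2, hw.1, hw.2]
      calc ∫⁻ w in Ioo (-(1:ℝ)/2) (1/2),
            ENNReal.ofReal (‖f (u + s * w) - f u‖ ^ 2 / |w| ^ (1 + 2 * σ))
          = ∫⁻ w in Ioo (-(1:ℝ)/2) (1/2),
              ENNReal.ofReal (s ^ (1 + 2 * σ)) * gagliardoIntegrand σ f u (0 + s * w) := by
            refine lintegral_congr fun w => ?_
            have := Real.rpow_pos_of_pos hs.1 (1 + 2 * σ)
            rw [gagliardoIntegrand, ← ENNReal.ofReal_mul this.le, zero_add, abs_mul,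
              abs_of_pos hs.1, Real.mul_rpow hs.1.le (abs_nonneg w)]
            congr 1
            rw [← mul_div_assoc, mul_div_mul_left _ _ this.ne']
        _ = ENNReal.ofReal (s ^ (1 + 2 * σ)) *
              ∫⁻ w in Ioo (-(1:ℝ)/2) (1/2), gagliardoIntegrand σ f u (0 + s * w) :=
            lintegral_const_mul _ (hm.comp (by fun_prop))
        _ ≤ ENNReal.ofReal (s ^ (1 + 2 * σ)) *
              ∫⁻ w in (fun w => 0 + s * w) ⁻¹' Ioo (-(1:ℝ)/2) (1/2),
                gagliardoIntegrand σ f u (0 + s * w) :=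
            mul_le_mul' le_rfl (lintegral_mono_set hsub)
        _ = ENNReal.ofReal (s ^ (1 + 2 * σ)) * (ENNReal.ofReal |s⁻¹| * B) := by
            rw [setLIntegral_comp_add_mul hm 0 hs.1.ne' measurableSet_Ioo]
        _ ≤ 1 * B := by
            have h0 := hs.1
            rw [← mul_assoc, ← ENNReal.ofReal_mul (by positivity), abs_of_pos (by positivity),
              ← div_eq_mul_inv, ← Real.rpow_sub_one hs.1.ne']
            refine mul_le_mul' ?_ le_rfl
            rw [ENNReal.ofReal_le_one]
            exact Real.rpow_le_one hs.1.le hs.2 (by linarith)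
        _ = B := one_mul B
    refine (setLIntegral_mono' measurableSet_Ioc h2).trans_eq ?_
    simp
  · refine Measurable.aemeasurable (ENNReal.measurable_ofReal.comp (Measurable.div ?_ ?_))
    · exact (Continuous.measurable (by fun_prop))
    · exact (continuous_abs.comp continuous_fst).measurable.pow_const _

theorem measurable_meanSqOsc_div (r : ℝ) {f : ℝ → E} (hf : Continuous f) :
    Measurable fun p : ℝ × ℝ => meanSqOsc f p / |p.2| ^ r :=
  (continuous_meanSqOsc hf).measurable.div
    ((continuous_abs.comp continuous_snd).measurable.pow_const _)

theorem lintegral_pairMeasure_meanSqOsc_le {σ : ℝ} (hσ : 0 ≤ σ) {f : ℝ → E}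
    (hf : Continuous f) :
    ∫⁻ p, ENNReal.ofReal (meanSqOsc f p / |p.2| ^ (1 + 2 * σ)) ∂pairMeasure ≤ gagliardoSq σ f := by
  rw [pairMeasure, lintegral_prod]
  · exact lintegral_mono fun u => lintegral_meanSqOsc_div_le hσ hf u
  · exact (ENNReal.measurable_ofReal.comp (measurable_meanSqOsc_div _ hf)).aemeasurable

theorem integrable_meanSqOsc_div {σ : ℝ} (hσ : 0 ≤ σ) {f : ℝ → E} (hf : Continuous f)
    (hG : gagliardoSq σ f < ⊤) :
    Integrable (fun p => meanSqOsc f p / |p.2| ^ (1 + 2 * σ)) pairMeasure := by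
  refine ⟨(measurable_meanSqOsc_div _ hf).aestronglyMeasurable, ?_⟩
  rw [hasFiniteIntegral_iff_ofReal (ae_of_all _ fun p =>
    div_nonneg (meanSqOsc_nonneg f p) (by positivity))]
  exact (lintegral_pairMeasure_meanSqOsc_le hσ hf).trans_lt hG

theorem integral_meanSqOsc_div_le {σ : ℝ} (hσ : 0 ≤ σ) {f : ℝ → E} (hf : Continuous f)
    (hG : gagliardoSq σ f < ⊤) :
    ∫ p, meanSqOsc f p / |p.2| ^ (1 + 2 * σ) ∂pairMeasure ≤ (gagliardoSq σ f).toReal := by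
  rw [integral_eq_lintegral_of_nonneg_ae (ae_of_all _ fun p =>
    div_nonneg (meanSqOsc_nonneg f p) (by positivity))
    (measurable_meanSqOsc_div _ hf).aestronglyMeasurable]
  exact ENNReal.toReal_mono hG.ne (lintegral_pairMeasure_meanSqOsc_le hσ hf)

end Weight

/-! ### Chord-arc curves -/

section ChordArc

section

variable {E : Type*} [NormedAddCommGroup E] [NormedSpace ℝ E]

/-- The mean of `f` over the segment from `u` to `u + w`. -/
def segMean (f : ℝ → E) (p : ℝ × ℝ) : E := ∫ s in (0:ℝ)..1, f (p.1 + s * p.2)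

theorem continuous_segMean {f : ℝ → E} (hf : Continuous f) : Continuous (segMean f) :=
  intervalIntegral.continuous_parametric_intervalIntegral_of_continuous'
    (f := fun (p : ℝ × ℝ) s => f (p.1 + s * p.2))
    (by simp only [Function.uncurry_def]; fun_prop) 0 1

theorem smul_segMean (f : ℝ → E) (u w : ℝ) : w • segMean f (u, w) = ∫ θ in u..(u + w), f θ := by
  have := intervalIntegral.smul_integral_comp_add_mul (a := 0) (b := 1) f w u
  simpa only [segMean, mul_comm, zero_mul, mul_one, one_mul, mul_zero, add_zero] using this

theorem segMean_add {f g : ℝ → E} (hf : Continuous f) (hg : Continuous g) (p : ℝ × ℝ) :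
    segMean (f + g) p = segMean f p + segMean g p :=
  intervalIntegral.integral_add (Continuous.intervalIntegrable (by fun_prop) _ _)
    (Continuous.intervalIntegrable (by fun_prop) _ _)

theorem norm_segMean_le_of_norm_le {f : ℝ → E} {M : ℝ} (h : ∀ u, ‖f u‖ ≤ M) (p : ℝ × ℝ) :
    ‖segMean f p‖ ≤ M := by
  simpa [segMean] using intervalIntegral.norm_integral_le_of_norm_le_const (a := 0) (b := 1)
    (f := fun s => f (p.1 + s * p.2)) (C := M) fun s _ => h _

theorem norm_segMean_le (f : ℝ → E) (p : ℝ × ℝ) : ‖segMean f p‖ ≤ segMean (fun u => ‖f u‖) p :=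
  intervalIntegral.norm_integral_le_integral_norm zero_le_one

theorem segMean_zero_right [CompleteSpace E] (f : ℝ → E) (u : ℝ) : segMean f (u, 0) = f u := by
  simp [segMean]

end

/-- `γ` is a closed `C¹` curve of speed at most `M` all of whose chords of parameter width
`w ∈ [-1/2, 1/2]` have length at least `c |w|`. -/
structure ChordArc (c M : ℝ) (γ : ℝ → Rn n) : Prop where
  periodic : Function.Periodic γ 1
  contDiff : ContDiff ℝ 1 γ
  pos : 0 < c
  le_norm : ∀ u w, |w| ≤ 1 / 2 → c ≤ ‖segMean (deriv γ) (u, w)‖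
  norm_le : ∀ u, ‖deriv γ u‖ ≤ M

theorem smul_segMean_deriv {γ : ℝ → Rn n} (h : ContDiff ℝ 1 γ) (u w : ℝ) :
    w • segMean (deriv γ) (u, w) = γ (u + w) - γ u := by
  rw [smul_segMean]
  exact intervalIntegral.integral_deriv_eq_sub
    (fun x _ => (h.differentiable one_ne_zero) x)
    ((h.continuous_deriv le_rfl).intervalIntegrable _ _)

theorem segMean_norm_nonneg (f : ℝ → Rn n) (p : ℝ × ℝ) : 0 ≤ segMean (fun θ => ‖f θ‖) p :=
  intervalIntegral.integral_nonneg zero_le_one fun _ _ => norm_nonneg _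

theorem arcLen_eq (γ : ℝ → Rn n) (u w : ℝ) :
    arcLen γ u w = |w| * segMean (fun θ => ‖deriv γ θ‖) (u, w) := by
  rw [arcLen, ← smul_segMean, smul_eq_mul, abs_mul, abs_of_nonneg (segMean_norm_nonneg _ _)]

namespace ChordArc

variable {c M : ℝ} {γ : ℝ → Rn n}

theorem contDeriv (h : ChordArc c M γ) : Continuous (deriv γ) :=
  h.contDiff.continuous_deriv le_rfl

theorem deriv_periodic (h : ChordArc c M γ) : Function.Periodic (deriv γ) 1 := fun u => by
  have : (fun v => γ (v + 1)) = γ := funext h.periodic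
  conv_rhs => rw [← this]
  rw [deriv_comp_add_const]

theorem le_norm_deriv (h : ChordArc c M γ) (u : ℝ) : c ≤ ‖deriv γ u‖ := by
  simpa [segMean_zero_right] using h.le_norm u 0 (by norm_num)

theorem regularCurve (h : ChordArc c M γ) : RegularCurve γ := fun u => by
  have := h.pos.trans_le (h.le_norm_deriv u)
  exact norm_pos_iff.1 this

theorem perInjective (h : ChordArc c M γ) : PerInjective γ := by
  intro u v huv
  refine ⟨round (v - u), ?_⟩
  set k := round (v - u)
  have hw : |v - u - k| ≤ 1 / 2 := abs_sub_round _
  have e : γ (u + (v - u - k)) - γ u = 0 := by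
    have := h.periodic.sub_zsmul_eq (x := v) k
    rw [zsmul_eq_mul, mul_one] at this
    rw [show u + (v - u - k) = v - k by ring, this, huv, sub_self]
  rw [← smul_segMean_deriv h.contDiff, smul_eq_zero] at e
  rcases e with e | e
  · linarith
  · have := h.le_norm u _ hw
    rw [e, norm_zero] at this
    exact absurd this (not_le.2 h.pos)

theorem _root_.MemH1.exists_chordArc {σ : ℝ} (h : MemH1 σ γ) (hi : PerInjective γ)
    (hr : RegularCurve γ) : ∃ c M, ChordArc c M γ := by
  have hc := h.contDeriv
  have hp := h.deriv_periodic
  have hne : ∀ u w, |w| ≤ 1 / 2 → segMean (deriv γ) (u, w) ≠ 0 := by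
    intro u w hw h0
    rcases eq_or_ne w 0 with rfl | hw0
    · rw [segMean_zero_right] at h0; exact hr u h0
    · have e := smul_segMean_deriv h.2.1 u w
      rw [h0, smul_zero] at e
      obtain ⟨k, hk⟩ := hi _ _ (sub_eq_zero.1 e.symm)
      have hk' : w = -(k : ℝ) := by linarith
      rw [hk', abs_neg] at hw
      have hk1 : |k| < 1 := by
        have : ((|k| : ℤ) : ℝ) < 1 := by push_cast; linarith
        exact_mod_cast this
      rw [Int.abs_lt_one_iff] at hk1
      simp [hk1] at hk'
      exact hw0 hk'
  obtain ⟨p, hpK, hpm⟩ := (isCompact_Icc (a := (0:ℝ)) (b := 1)).prod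
    (isCompact_Icc (a := (-(1:ℝ)/2)) (b := 1/2)) |>.exists_isMinOn
      ⟨(0, 0), by norm_num⟩ (continuous_segMean hc).norm.continuousOn
  obtain ⟨q, -, hqm⟩ := (isCompact_Icc (a := (0:ℝ)) (b := 1)).exists_isMaxOn
      ⟨0, by norm_num⟩ hc.norm.continuousOn
  have hpw : |p.2| ≤ 1 / 2 := abs_le.2 ⟨by have := hpK.2.1; linarith, hpK.2.2⟩
  refine ⟨‖segMean (deriv γ) p‖, ‖deriv γ q‖, h.1, h.2.1, norm_pos_iff.2 (hne _ _ hpw), ?_, ?_⟩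
  · intro u w hw
    have hper : Function.Periodic (fun u => segMean (deriv γ) (u, w)) 1 := fun u => by
      simp only [segMean]
      refine intervalIntegral.integral_congr fun s _ => ?_
      beta_reduce
      rw [add_right_comm, hp]
    obtain ⟨y, hy, e⟩ := hper.exists_mem_Ico₀ zero_lt_one u
    beta_reduce at e
    rw [e]
    rw [abs_le] at hw
    exact hpm (show (y, w) ∈ _ from ⟨⟨hy.1, hy.2.le⟩, by constructor <;> linarith⟩)
  · intro u
    obtain ⟨y, hy, e⟩ := hp.exists_mem_Ico₀ zero_lt_one u
    rw [e]
    exact hqm ⟨hy.1, hy.2.le⟩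

theorem add {δ : ℝ} {h : ℝ → Rn n} (hγ : ChordArc c M γ) (hp : Function.Periodic h 1)
    (hc : ContDiff ℝ 1 h) (hδ : ∀ u, ‖deriv h u‖ ≤ δ) (hlt : δ < c) :
    ChordArc (c - δ) (M + δ) (γ + h) := by
  have e : deriv (γ + h) = deriv γ + deriv h := funext fun u =>
    _root_.deriv_add (hγ.contDiff.differentiable one_ne_zero u) (hc.differentiable one_ne_zero u)
  refine ⟨hγ.periodic.add hp, hγ.contDiff.add hc, sub_pos.2 hlt, fun u w hw => ?_, fun u => ?_⟩
  · rw [e, segMean_add hγ.contDeriv (hc.continuous_deriv le_rfl)]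
    have h1 := hγ.le_norm u w hw
    have h2 := norm_segMean_le_of_norm_le hδ (u, w)
    have h3 := norm_sub_le_norm_add (segMean (deriv γ) (u, w)) (segMean (deriv h) (u, w))
    linarith
  · rw [e]
    exact (norm_add_le _ _).trans (add_le_add (hγ.norm_le u) (hδ u))

theorem mono {c' M' : ℝ} (h : ChordArc c M γ) (hc : c' ≤ c) (h0 : 0 < c') (hM : M ≤ M') :
    ChordArc c' M' γ :=
  ⟨h.periodic, h.contDiff, h0, fun u w hw => hc.trans (h.le_norm u w hw),
    fun u => (h.norm_le u).trans hM⟩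

theorem le_segMean (h : ChordArc c M γ) {u w : ℝ} (hw : |w| ≤ 1 / 2) :
    c ≤ segMean (fun θ => ‖deriv γ θ‖) (u, w) :=
  (h.le_norm u w hw).trans (norm_segMean_le _ _)

theorem curveLen_eq (h : ChordArc c M γ) (u : ℝ) :
    curveLen γ = ∫ θ in u..(u + 1), ‖deriv γ θ‖ := by
  have hp : Function.Periodic (fun θ => ‖deriv γ θ‖) 1 := fun θ => by
    simp only [h.deriv_periodic θ]
  have := hp.intervalIntegral_add_eq 0 u
  rwa [zero_add] at this

theorem le_integral (h : ChordArc c M γ) {a b : ℝ} (hab : a ≤ b) :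
    c * (b - a) ≤ ∫ θ in a..b, ‖deriv γ θ‖ := by
  have := intervalIntegral.integral_mono_on (μ := volume) hab
    (intervalIntegrable_const (c := c)) (h.contDeriv.norm.intervalIntegrable a b)
    fun θ _ => h.le_norm_deriv θ
  simpa [mul_comm] using this

/-- The complementary arc is an interval of parameter width `1 - |w|`. -/
theorem exists_curveLen_sub_arcLen (h : ChordArc c M γ) (u w : ℝ) :
    ∃ a b, b - a = 1 - |w| ∧ curveLen γ - arcLen γ u w = ∫ θ in a..b, ‖deriv γ θ‖ ∧
      ‖γ b - γ a‖ = ‖γ (u + w) - γ u‖ := by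
  have ii : ∀ a b, IntervalIntegrable (fun θ => ‖deriv γ θ‖) volume a b :=
    fun a b => h.contDeriv.norm.intervalIntegrable a b
  have hn : ∀ {a b : ℝ}, a ≤ b → 0 ≤ ∫ θ in a..b, ‖deriv γ θ‖ := fun hab =>
    intervalIntegral.integral_nonneg hab fun _ _ => norm_nonneg _
  rcases le_total 0 w with h0 | h0
  · refine ⟨u + w, u + 1, by rw [abs_of_nonneg h0]; ring, ?_, ?_⟩
    · rw [h.curveLen_eq u, arcLen, abs_of_nonneg (hn (by linarith)),
        ← intervalIntegral.integral_add_adjacent_intervals (ii u (u + w)) (ii (u + w) (u + 1))]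
      ring
    · rw [h.periodic, norm_sub_rev]
  · refine ⟨u, u + w + 1, by rw [abs_of_nonpos h0]; ring, ?_, ?_⟩
    · rw [h.curveLen_eq (u + w), arcLen, intervalIntegral.integral_symm (u + w) u, abs_neg,
        abs_of_nonneg (hn (by linarith)), ← intervalIntegral.integral_add_adjacent_intervals
        (ii (u + w) u) (ii u (u + w + 1))]
      ring
    · rw [h.periodic]

theorem le_curveLen_sub_arcLen (h : ChordArc c M γ) (u : ℝ) {w : ℝ} (hw : |w| ≤ 1 / 2) :
    c / 2 ≤ curveLen γ - arcLen γ u w := by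
  obtain ⟨a, b, hab, e, -⟩ := h.exists_curveLen_sub_arcLen u w
  rw [e]
  refine le_trans ?_ (h.le_integral (by linarith))
  rw [hab]; nlinarith [h.pos]

theorem chord_le_integral (h : ChordArc c M γ) {a b : ℝ} (hab : a ≤ b) :
    ‖γ b - γ a‖ ≤ ∫ θ in a..b, ‖deriv γ θ‖ := by
  rw [← intervalIntegral.integral_deriv_eq_sub
    (fun x _ => (h.contDiff.differentiable one_ne_zero) x)
    (h.contDeriv.intervalIntegrable _ _)]
  exact intervalIntegral.norm_integral_le_integral_norm hab

theorem chord_le_idist (h : ChordArc c M γ) (u : ℝ) {w : ℝ} (hw : |w| ≤ 1 / 2) :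
    ‖γ (u + w) - γ u‖ ≤ idist γ u w := by
  refine le_min ?_ ?_
  · rw [arcLen_eq, ← smul_segMean_deriv h.contDiff, norm_smul, Real.norm_eq_abs]
    exact mul_le_mul_of_nonneg_left (norm_segMean_le _ _) (abs_nonneg w)
  · obtain ⟨a, b, hab, e, e'⟩ := h.exists_curveLen_sub_arcLen u w
    rw [e, ← e']
    exact h.chord_le_integral (by linarith)

end ChordArc

end ChordArc

/-! ### A formula for the energy -/

section Formula

/-- An antiderivative of `x ↦ (L - x)^(-α) - x^(-α)`. -/
def distAntideriv (α L x : ℝ) : ℝ := ((L - x) ^ (1 - α) + x ^ (1 - α)) / (α - 1)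

theorem hasDerivAt_distAntideriv {α L x : ℝ} (hα : 1 < α) (h0 : 0 < x) (hL : x < L) :
    HasDerivAt (distAntideriv α L) ((L - x) ^ (-α) - x ^ (-α)) x := by
  have h1 : HasDerivAt (fun x => (L - x) ^ (1 - α)) ((-1) * (1 - α) * (L - x) ^ (1 - α - 1)) x :=
    ((hasDerivAt_id x).const_sub L).rpow_const (Or.inl (sub_pos.2 hL).ne')
  have h2 : HasDerivAt (fun x => x ^ (1 - α)) (1 * (1 - α) * x ^ (1 - α - 1)) x :=
    (hasDerivAt_id x).rpow_const (Or.inl h0.ne')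
  refine ((h1.add h2).div_const (α - 1)).congr_deriv ?_
  have h3 : α - 1 ≠ 0 := (sub_pos.2 hα).ne'
  rw [show 1 - α - 1 = -α by ring]
  field_simp; ring

theorem integral_inv_min_rpow {α L : ℝ} (hα : 1 < α) (hL : 0 < L) {ρ : ℝ → ℝ} (hρ : Continuous ρ)
    (h0 : ∀ w, 0 ≤ ρ w) (hs : ∫ θ in (0:ℝ)..(1/2), ρ θ < L) :
    ∫ w in (0:ℝ)..(1/2), (1 / min (∫ θ in (0:ℝ)..w, ρ θ) (L - ∫ θ in (0:ℝ)..w, ρ θ) ^ α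
        - 1 / (∫ θ in (0:ℝ)..w, ρ θ) ^ α) * ρ w
      = distAntideriv α L (max (∫ θ in (0:ℝ)..(1/2), ρ θ) (L / 2)) - distAntideriv α L (L / 2) := by
  have ii : ∀ a b, IntervalIntegrable ρ volume a b := fun a b => hρ.intervalIntegrable a b
  set a : ℝ → ℝ := fun w => ∫ θ in (0:ℝ)..w, ρ θ with ha
  set s : ℝ := ∫ θ in (0:ℝ)..(1/2), ρ θ with hsdef
  set g : ℝ → ℝ := fun x => (L - max x (L / 2)) ^ (-α) - (max x (L / 2)) ^ (-α) with hg
  have ha' : ∀ w, HasDerivAt a (ρ w) w := fun w =>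
    intervalIntegral.integral_hasDerivAt_right (ii 0 w) (hρ.stronglyMeasurableAtFilter _ _)
      hρ.continuousAt
  have hab : ∀ w ∈ Icc (0:ℝ) (1/2), 0 ≤ a w ∧ a w ≤ s := fun w hw =>
    ⟨intervalIntegral.integral_nonneg hw.1 fun θ _ => h0 θ,
      intervalIntegral.integral_mono_interval le_rfl hw.1 hw.2 (ae_of_all _ h0) (ii _ _)⟩
  have hgc : ∀ t : Set ℝ, (∀ x ∈ t, x < L) → ContinuousOn g t := by
    intro t ht
    have hm : ∀ x ∈ t, max x (L / 2) < L := fun x hx => max_lt (ht x hx) (by linarith)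
    refine ContinuousOn.sub (ContinuousOn.rpow_const (by fun_prop) fun x hx => Or.inl ?_)
      (ContinuousOn.rpow_const (by fun_prop) fun x hx => Or.inl ?_)
    · exact (sub_pos.2 (hm x hx)).ne'
    · exact ((half_pos hL).trans_le (le_max_right _ _)).ne'
  have e1 : ∀ w ∈ uIcc (0:ℝ) (1/2), (1 / min (a w) (L - a w) ^ α - 1 / (a w) ^ α) * ρ w
      = (g ∘ a) w * ρ w := by
    intro w hw
    rw [uIcc_of_le (by norm_num)] at hw
    obtain ⟨hw0, hws⟩ := hab w hw
    congr 1
    simp only [hg, Function.comp_apply]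
    rcases le_total (a w) (L / 2) with h | h
    · rw [max_eq_right h, min_eq_left (by linarith), sub_self, sub_half, sub_self]
    · rw [max_eq_left h, min_eq_right (by linarith), Real.rpow_neg (by linarith),
        Real.rpow_neg (by linarith), one_div, one_div]
  have hs0 : 0 ≤ s := (hab (1/2) (by norm_num)).1
  have e2 : ∫ w in (0:ℝ)..(1/2), (g ∘ a) w * ρ w = ∫ x in (0:ℝ)..s, g x := by
    have := intervalIntegral.integral_comp_mul_deriv' (a := 0) (b := 1/2) (f := a) (f' := ρ)
      (g := g) (fun x _ => ha' x) hρ.continuousOn (hgc _ (by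
        rintro _ ⟨w, hw, rfl⟩
        rw [uIcc_of_le (by norm_num)] at hw
        exact (hab w hw).2.trans_lt hs))
    rw [this]
    simp [ha, hsdef]
  rw [intervalIntegral.integral_congr e1, e2]
  have hz : ∀ y, 0 ≤ y → y ≤ L / 2 → ∫ x in (0:ℝ)..y, g x = 0 := by
    intro y hy0 hy
    refine (intervalIntegral.integral_congr (g := fun _ => (0:ℝ)) fun x hx => ?_).trans (by simp)
    rw [uIcc_of_le hy0] at hx
    simp only [hg]
    rw [max_eq_right (hx.2.trans hy), sub_half, sub_self]
  rcases le_total s (L / 2) with h | h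
  · rw [hz s hs0 h, max_eq_right h, sub_self]
  · have hi : ∀ x y, 0 ≤ x → x ≤ y → y ≤ s → IntervalIntegrable g volume x y :=
      fun x y _ hxy hy => ContinuousOn.intervalIntegrable (hgc _ (by
        intro z hz
        rw [uIcc_of_le hxy] at hz
        exact (hz.2.trans hy).trans_lt hs))
    rw [← intervalIntegral.integral_add_adjacent_intervals
      (hi 0 (L / 2) le_rfl (by linarith) h) (hi (L / 2) s (by linarith) h le_rfl),
      hz _ (by linarith) le_rfl, zero_add, max_eq_left h]
    refine intervalIntegral.integral_eq_sub_of_hasDerivAt (fun x hx => ?_)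
      (hi (L / 2) s (by linarith) h le_rfl)
    rw [uIcc_of_le h] at hx
    simp only [hg]
    rw [max_eq_left hx.1]
    exact hasDerivAt_distAntideriv hα (by linarith [hx.1]) (by linarith [hx.2])

theorem distAntideriv_max_add (α : ℝ) {x y : ℝ} :
    distAntideriv α (x + y) (max x ((x + y) / 2)) - distAntideriv α (x + y) ((x + y) / 2)
        + (distAntideriv α (x + y) (max y ((x + y) / 2)) - distAntideriv α (x + y) ((x + y) / 2))
      = (y ^ (1 - α) + x ^ (1 - α) - 2 * ((x + y) / 2) ^ (1 - α)) / (α - 1) := by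
  rcases le_total x y with h | h
  · rw [max_eq_right (show x ≤ (x + y) / 2 by linarith),
      max_eq_left (show (x + y) / 2 ≤ y by linarith)]
    simp only [distAntideriv, sub_half, add_sub_cancel_right]
    ring
  · rw [max_eq_left (show (x + y) / 2 ≤ x by linarith),
      max_eq_right (show y ≤ (x + y) / 2 by linarith)]
    simp only [distAntideriv, sub_half, add_sub_cancel_left]
    ring

/-- The part of the energy integrand coming from the chord-arc defect. -/
def ohMain (α : ℝ) (γ : ℝ → Rn n) (p : ℝ × ℝ) : ℝ :=
  (1 / |p.2| ^ α) * ((‖segMean (deriv γ) p‖ ^ (-α) - segMean (fun θ => ‖deriv γ θ‖) p ^ (-α))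
    * (‖deriv γ p.1‖ * ‖deriv γ (p.1 + p.2)‖))

/-- The bounded part of the energy integrand, due to the shorter arc. -/
def ohRest (α : ℝ) (γ : ℝ → Rn n) (u w : ℝ) : ℝ :=
  (1 / idist γ u w ^ α - 1 / arcLen γ u w ^ α) * ‖deriv γ (u + w)‖

/-- The integral of `ohRest` in the second variable, in terms of the lengths `x`, `y` of the two
arcs of parameter width `1/2`. -/
def halfArcTerm (α x y : ℝ) : ℝ :=
  (y ^ (1 - α) + x ^ (1 - α) - 2 * ((x + y) / 2) ^ (1 - α)) / (α - 1)

namespace ChordArc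

variable {c M α : ℝ} {γ : ℝ → Rn n}

theorem measurable_ohMain (h : ContDiff ℝ 1 γ) : Measurable (ohMain α γ) := by
  have hc := h.continuous_deriv le_rfl
  refine Measurable.mul (Measurable.const_div
    ((continuous_abs.comp continuous_snd).measurable.pow_const _) _) (Measurable.mul ?_ ?_)
  · exact ((continuous_segMean hc).norm.measurable.pow_const _).sub
      ((continuous_segMean hc.norm).measurable.pow_const _)
  · exact Continuous.measurable (by fun_prop)

theorem ohIntegrand_eq (h : ChordArc c M γ) (u w : ℝ) :
    ohIntegrand α γ u w = ohMain α γ (u, w) - ‖deriv γ u‖ * ohRest α γ u w := by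
  have e : 1 / ‖γ (u + w) - γ u‖ ^ α - 1 / arcLen γ u w ^ α = (1 / |w| ^ α) *
      (‖segMean (deriv γ) (u, w)‖ ^ (-α) - segMean (fun θ => ‖deriv γ θ‖) (u, w) ^ (-α)) := by
    rw [arcLen_eq, ← smul_segMean_deriv h.contDiff, norm_smul, Real.norm_eq_abs,
      Real.mul_rpow (abs_nonneg w) (norm_nonneg _),
      Real.mul_rpow (abs_nonneg w) (segMean_norm_nonneg _ _), Real.rpow_neg (norm_nonneg _),
      Real.rpow_neg (segMean_norm_nonneg _ _), one_div, one_div, one_div, mul_inv, mul_inv]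
    ring
  unfold ohIntegrand ohMain ohRest
  rw [← mul_assoc (1 / |w| ^ α), ← e]
  ring

theorem continuous_arcLen (h : ChordArc c M γ) :
    Continuous fun p : ℝ × ℝ => arcLen γ p.1 p.2 := by
  simp only [arcLen_eq]
  exact (continuous_snd.abs).mul (continuous_segMean h.contDeriv.norm)

theorem measurable_ohRest (h : ChordArc c M γ) :
    Measurable fun p : ℝ × ℝ => ohRest α γ p.1 p.2 := by
  have ha := h.continuous_arcLen
  have hi : Continuous fun p : ℝ × ℝ => idist γ p.1 p.2 := ha.min (continuous_const.sub ha)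
  have hd := h.contDeriv
  refine Measurable.mul (Measurable.sub ?_ ?_) (Continuous.measurable (by fun_prop))
  · exact (hi.measurable.pow_const _).const_div _
  · exact (ha.measurable.pow_const _).const_div _

theorem abs_ohRest_le (hα : 0 ≤ α) (h : ChordArc c M γ) (u : ℝ) {w : ℝ} (hw : |w| ≤ 1 / 2) :
    |ohRest α γ u w| ≤ 1 / (c / 2) ^ α * M := by
  have hc := h.pos
  have h1 := h.le_curveLen_sub_arcLen u hw
  unfold ohRest
  rw [abs_mul, abs_norm]
  refine mul_le_mul ?_ (h.norm_le _) (norm_nonneg _) (by positivity)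
  rcases le_total (arcLen γ u w) (curveLen γ - arcLen γ u w) with h2 | h2
  · rw [idist, min_eq_left h2, sub_self, abs_zero]; positivity
  · rw [idist, min_eq_right h2]
    have p1 : (c / 2) ^ α ≤ (curveLen γ - arcLen γ u w) ^ α :=
      Real.rpow_le_rpow (by positivity) h1 hα
    have p2 : (curveLen γ - arcLen γ u w) ^ α ≤ (arcLen γ u w) ^ α :=
      Real.rpow_le_rpow (by linarith) h2 hα
    have p0 : 0 < (c / 2) ^ α := Real.rpow_pos_of_pos (by linarith) _
    rw [abs_of_nonneg (sub_nonneg.2 (one_div_le_one_div_of_le (p0.trans_le p1) p2))]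
    have := one_div_le_one_div_of_le p0 p1
    have h3 := one_div_nonneg.2 (p0.le.trans (p1.trans p2))
    linarith

theorem ohIntegrand_nonneg (hα : 0 < α) (h : ChordArc c M γ) (u : ℝ) {w : ℝ}
    (hw : |w| ≤ 1 / 2) : 0 ≤ ohIntegrand α γ u w := by
  unfold ohIntegrand
  rcases eq_or_ne w 0 with rfl | hw0
  · have h1 := h.le_curveLen_sub_arcLen u (w := 0) (by norm_num)
    have h2 : arcLen γ u 0 = 0 := by simp [arcLen]
    have h3 : idist γ u 0 = 0 := by
      rw [idist, h2, min_eq_left (by rw [h2] at h1; linarith [h.pos])]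
    simp [h3]
  · refine mul_nonneg (mul_nonneg (sub_nonneg.2 (one_div_le_one_div_of_le ?_ ?_))
      (norm_nonneg _)) (norm_nonneg _)
    · refine Real.rpow_pos_of_pos ?_ _
      rw [← smul_segMean_deriv h.contDiff, norm_smul]
      exact mul_pos (norm_pos_iff.2 hw0) (h.pos.trans_le (h.le_norm u w hw))
    · exact Real.rpow_le_rpow (norm_nonneg _) (h.chord_le_idist u hw) hα.le

theorem integral_ohRest (hα : 1 < α) (h : ChordArc c M γ) (u : ℝ) :
    ∫ w in Ioo (-(1:ℝ)/2) (1/2), ohRest α γ u w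
      = halfArcTerm α (1 / 2 * segMean (fun θ => ‖deriv γ θ‖) (u, 1 / 2))
        (1 / 2 * segMean (fun θ => ‖deriv γ θ‖) (u, -1 / 2)) := by
  have hd := h.contDeriv
  have hc := h.pos
  have ii : ∀ a b, IntervalIntegrable (fun θ => ‖deriv γ θ‖) volume a b :=
    fun a b => hd.norm.intervalIntegrable a b
  have hr : ∀ a b, -(1/2) ≤ a → a ≤ b → b ≤ 1/2 → IntervalIntegrable (ohRest α γ u) volume a b := by
    intro a b ha hab hb
    rw [intervalIntegrable_iff_integrableOn_Ioc_of_le hab]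
    refine Measure.integrableOn_of_bounded (M := 1 / (c / 2) ^ α * M) (by simp)
      (h.measurable_ohRest.comp (measurable_prodMk_left (x := u))).aestronglyMeasurable
      ((ae_restrict_iff' measurableSet_Ioc).2 (ae_of_all _ fun w hw => ?_))
    exact h.abs_ohRest_le (by linarith) u (abs_le.2 ⟨by linarith [hw.1], by linarith [hw.2]⟩)
  have ep : ∀ w, ∫ θ in (0:ℝ)..w, ‖deriv γ (u + θ)‖ = ∫ θ in u..(u + w), ‖deriv γ θ‖ := fun w => by
    rw [intervalIntegral.integral_comp_add_left (fun θ => ‖deriv γ θ‖) u, add_zero]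
  have em : ∀ w, ∫ θ in (0:ℝ)..w, ‖deriv γ (u - θ)‖ = ∫ θ in (u - w)..u, ‖deriv γ θ‖ := fun w => by
    rw [intervalIntegral.integral_comp_sub_left (fun θ => ‖deriv γ θ‖) u, sub_zero]
  have hp : 1 / 2 * segMean (fun θ => ‖deriv γ θ‖) (u, 1 / 2)
      = ∫ θ in (0:ℝ)..(1/2), ‖deriv γ (u + θ)‖ := by
    rw [ep, ← smul_segMean, smul_eq_mul]
  have hm : 1 / 2 * segMean (fun θ => ‖deriv γ θ‖) (u, -1 / 2)
      = ∫ θ in (0:ℝ)..(1/2), ‖deriv γ (u - θ)‖ := by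
    have := smul_segMean (fun θ => ‖deriv γ θ‖) u (-1 / 2)
    rw [smul_eq_mul] at this
    rw [em, intervalIntegral.integral_symm, show u - 1 / 2 = u + -1 / 2 by ring, ← this]
    ring
  have hL : curveLen γ = (∫ θ in (0:ℝ)..(1/2), ‖deriv γ (u + θ)‖)
      + ∫ θ in (0:ℝ)..(1/2), ‖deriv γ (u - θ)‖ := by
    rw [ep, em, h.curveLen_eq (u - 1 / 2), add_comm (∫ θ in u..(u + 1 / 2), ‖deriv γ θ‖),
      intervalIntegral.integral_add_adjacent_intervals (ii _ _) (ii _ _)]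
    congr 1; ring
  have hpos : 0 < ∫ θ in (0:ℝ)..(1/2), ‖deriv γ (u + θ)‖ := by
    rw [← hp]
    have := h.le_segMean (u := u) (w := 1 / 2) (by norm_num)
    linarith
  have hneg : 0 < ∫ θ in (0:ℝ)..(1/2), ‖deriv γ (u - θ)‖ := by
    rw [← hm]
    have := h.le_segMean (u := u) (w := -1 / 2) (by norm_num)
    linarith
  have e1 : ∫ w in (0:ℝ)..(1/2), ohRest α γ u w
      = distAntideriv α (curveLen γ) (max (∫ θ in (0:ℝ)..(1/2), ‖deriv γ (u + θ)‖)
        (curveLen γ / 2)) - distAntideriv α (curveLen γ) (curveLen γ / 2) := by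
    rw [← integral_inv_min_rpow hα (by linarith) (by fun_prop) (fun _ => norm_nonneg _)
      (by linarith)]
    refine intervalIntegral.integral_congr fun w hw => ?_
    rw [uIcc_of_le (by norm_num)] at hw
    have ea : arcLen γ u w = ∫ θ in (0:ℝ)..w, ‖deriv γ (u + θ)‖ := by
      rw [ep, arcLen, abs_of_nonneg (intervalIntegral.integral_nonneg (by linarith [hw.1])
        fun _ _ => norm_nonneg _)]
    simp only [ohRest, idist, ea]
  have e2 : ∫ w in (-(1/2):ℝ)..0, ohRest α γ u w
      = distAntideriv α (curveLen γ) (max (∫ θ in (0:ℝ)..(1/2), ‖deriv γ (u - θ)‖)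
        (curveLen γ / 2)) - distAntideriv α (curveLen γ) (curveLen γ / 2) := by
    rw [← integral_inv_min_rpow hα (by linarith) (by fun_prop) (fun _ => norm_nonneg _)
      (by linarith)]
    have := intervalIntegral.integral_comp_neg (a := 0) (b := 1/2) (ohRest α γ u)
    rw [neg_zero] at this
    rw [← this]
    refine intervalIntegral.integral_congr fun w hw => ?_
    rw [uIcc_of_le (by norm_num)] at hw
    have ea : arcLen γ u (-w) = ∫ θ in (0:ℝ)..w, ‖deriv γ (u - θ)‖ := by
      rw [em, arcLen, intervalIntegral.integral_symm, abs_neg, ← sub_eq_add_neg,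
        abs_of_nonneg (intervalIntegral.integral_nonneg (by linarith [hw.1])
        fun _ _ => norm_nonneg _)]
    simp only [ohRest, idist, ea, ← sub_eq_add_neg]
  rw [hp, hm, ← integral_Ioc_eq_integral_Ioo, ← intervalIntegral.integral_of_le (by norm_num), neg_div,
    ← intervalIntegral.integral_add_adjacent_intervals (b := 0) (hr _ _ (by norm_num) (by norm_num)
    (by norm_num)) (hr _ _ (by norm_num) (by norm_num) (by norm_num)), e1, e2, halfArcTerm,
    ← distAntideriv_max_add, ← hL]
  ring

theorem _root_.ae_pairMeasure_abs_lt : ∀ᵐ p ∂pairMeasure, |p.2| < 1 / 2 := by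
  rw [pairMeasure, Measure.prod_restrict]
  filter_upwards [ae_restrict_mem (measurableSet_Ioc.prod measurableSet_Ioo)] with p hp
  exact abs_lt.2 ⟨by have := hp.2.1; linarith, hp.2.2⟩

theorem integrable_ohRest (hα : 0 ≤ α) (h : ChordArc c M γ) :
    Integrable (fun p : ℝ × ℝ => ‖deriv γ p.1‖ * ohRest α γ p.1 p.2) pairMeasure := by
  have hd := h.contDeriv
  refine Integrable.of_bound ((Continuous.measurable (by fun_prop)).mul
    h.measurable_ohRest).aestronglyMeasurable (M * (1 / (c / 2) ^ α * M)) ?_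
  filter_upwards [ae_pairMeasure_abs_lt] with p hp
  rw [norm_mul, norm_norm]
  have h0 := (norm_nonneg _).trans (h.norm_le p.1)
  exact mul_le_mul (h.norm_le _) (h.abs_ohRest_le hα p.1 hp.le) (norm_nonneg _) h0

theorem oharaE_eq (hα : 0 < α) (h : ChordArc c M γ)
    (hint : Integrable (ohMain α γ) pairMeasure) :
    oharaE α γ = ENNReal.ofReal
      (∫ p, (ohMain α γ p - ‖deriv γ p.1‖ * ohRest α γ p.1 p.2) ∂pairMeasure) := by
  have hr := h.integrable_ohRest hα.le
  have hd := h.contDeriv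
  have hm : Measurable fun p : ℝ × ℝ => ohMain α γ p - ‖deriv γ p.1‖ * ohRest α γ p.1 p.2 :=
    (measurable_ohMain h.contDiff).sub ((Continuous.measurable (by fun_prop)).mul
      h.measurable_ohRest)
  have hi : Integrable
      (fun p : ℝ × ℝ => ohMain α γ p - ‖deriv γ p.1‖ * ohRest α γ p.1 p.2) pairMeasure :=
    hint.sub hr
  rw [ofReal_integral_eq_lintegral_ofReal hi, pairMeasure,
    lintegral_prod _ hm.ennreal_ofReal.aemeasurable]
  · simp only [oharaE, h.ohIntegrand_eq]
  · filter_upwards [ae_pairMeasure_abs_lt] with p hp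
    have := h.ohIntegrand_nonneg hα p.1 hp.le
    rwa [h.ohIntegrand_eq] at this

/-- The total contribution of `ohRest` to the energy. -/
def _root_.halfArcEnergy (α : ℝ) (f : ℝ → Rn n) : ℝ := ∫ u in (0:ℝ)..1, ‖f u‖ *
  halfArcTerm α (1 / 2 * segMean (fun θ => ‖f θ‖) (u, 1 / 2))
    (1 / 2 * segMean (fun θ => ‖f θ‖) (u, -1 / 2))

theorem oharaER_eq (hα : 1 < α) (h : ChordArc c M γ)
    (hint : Integrable (ohMain α γ) pairMeasure) :
    oharaER α γ = (∫ p, ohMain α γ p ∂pairMeasure) - halfArcEnergy α (deriv γ) := by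
  have hr := h.integrable_ohRest (α := α) (by linarith)
  have e : ∫ p, ‖deriv γ p.1‖ * ohRest α γ p.1 p.2 ∂pairMeasure
      = halfArcEnergy α (deriv γ) := by
    rw [pairMeasure, integral_prod _ hr, halfArcEnergy,
      intervalIntegral.integral_of_le zero_le_one]
    refine integral_congr_ae (ae_of_all _ fun u => ?_)
    simp only
    rw [integral_const_mul, h.integral_ohRest hα]
  rw [oharaER, h.oharaE_eq (by linarith) hint, ENNReal.toReal_ofReal, integral_sub hint hr, e]
  refine integral_nonneg_of_ae ?_
  filter_upwards [ae_pairMeasure_abs_lt] with p hp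
  have := h.ohIntegrand_nonneg (α := α) (by linarith) p.1 hp.le
  rwa [h.ohIntegrand_eq] at this

end ChordArc

end Formula

/-! ### Second differences of the energy -/

section Perturbation

/-- The vertices of the parallelogram at `x` spanned by `y` and `z`. -/
def parallelogram {V : Type*} [AddZeroClass V] (x y z : V) (i j : Bool) : V :=
  x + cond i y 0 + cond j z 0

theorem SqBound.parallelogram {E : Type*} [NormedAddCommGroup E] {κ a b : ℝ} {x y z : E}
    (h : ‖x‖ + ‖y‖ + ‖z‖ ≤ κ) (hy : ‖y‖ ≤ κ * a) (hz : ‖z‖ ≤ κ * b) (ha : 0 ≤ a) (hb : 0 ≤ b) :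
    SqBound κ a b (parallelogram x y z) := by
  have hx0 := norm_nonneg x
  have hy0 := norm_nonneg y
  have hz0 := norm_nonneg z
  refine ⟨fun i j => ?_, fun j => ?_, fun i => ?_, ?_⟩
  · refine (norm_add₃_le).trans (le_trans ?_ h)
    cases i <;> cases j <;> simp
    all_goals linarith
  · simpa [_root_.parallelogram] using hy
  · simpa [_root_.parallelogram] using hz
  · have hκ : 0 ≤ κ := by linarith
    have : 0 ≤ κ * a * b := by positivity
    simpa [_root_.parallelogram, add_assoc] using this

/-- Curves `γ + i h + j k`, uniformly of chord-arc type, with `|h'| ≤ a ≤ 1` and `|k'| ≤ b ≤ 1`. -/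
structure ChordArcFamily (c M a b : ℝ) (γ h k : ℝ → Rn n) : Prop where
  chordArc : ∀ i j, ChordArc c M (parallelogram γ h k i j)
  contDiff₀ : ContDiff ℝ 1 γ
  contDiff₁ : ContDiff ℝ 1 h
  contDiff₂ : ContDiff ℝ 1 k
  norm_le₁ : ∀ u, ‖deriv h u‖ ≤ a
  norm_le₂ : ∀ u, ‖deriv k u‖ ≤ b
  le_one₁ : a ≤ 1
  le_one₂ : b ≤ 1

namespace ChordArcFamily

variable {c M a b : ℝ} {γ h k : ℝ → Rn n}

theorem nonneg₁ (H : ChordArcFamily c M a b γ h k) : 0 ≤ a := (norm_nonneg _).trans (H.norm_le₁ 0)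

theorem nonneg₂ (H : ChordArcFamily c M a b γ h k) : 0 ≤ b := (norm_nonneg _).trans (H.norm_le₂ 0)

theorem deriv_parallelogram (H : ChordArcFamily c M a b γ h k) (i j : Bool) (u : ℝ) :
    deriv (parallelogram γ h k i j) u = parallelogram (deriv γ u) (deriv h u) (deriv k u) i j := by
  have h0 := (H.contDiff₀.differentiable one_ne_zero) u
  have h1 : DifferentiableAt ℝ (cond i h 0) u := by
    cases i
    · exact differentiableAt_const _
    · exact (H.contDiff₁.differentiable one_ne_zero) u
  have h2 : DifferentiableAt ℝ (cond j k 0) u := by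
    cases j
    · exact differentiableAt_const _
    · exact (H.contDiff₂.differentiable one_ne_zero) u
  have e1 : deriv (cond i h 0) u = cond i (deriv h u) 0 := by
    cases i
    · exact deriv_const u 0
    · rfl
  have e2 : deriv (cond j k 0) u = cond j (deriv k u) 0 := by
    cases j
    · exact deriv_const u 0
    · rfl
  unfold parallelogram
  rw [deriv_add (h0.add h1) h2, deriv_add h0 h1, e1, e2]

theorem exists_sqBound (α : ℝ) (n : ℕ) {c : ℝ} (hc : 0 < c) (M : ℝ) : ∃ C, 0 ≤ C ∧
    ∀ (a b : ℝ) (γ h k : ℝ → Rn n), ChordArcFamily c M a b γ h k → ∀ p : ℝ × ℝ, |p.2| ≤ 1 / 2 →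
      SqBound C a b (fun i j => segMean (fun θ => ‖deriv (parallelogram γ h k i j) θ‖) p) ∧
      SqBound (C * (meanSqOsc (deriv γ) p / |p.2| ^ α + meanSqOsc (deriv h) p / |p.2| ^ α / a ^ 2
          + meanSqOsc (deriv k) p / |p.2| ^ α / b ^ 2)) a b
        (fun i j => ohMain α (parallelogram γ h k i j) p) := by
  obtain ⟨C, hC, HC⟩ := SqBound.segment (E := Rn n) α hc (M + 2)
  refine ⟨9 * C, by positivity, fun a b γ h k H p hp => ?_⟩
  have ha := H.nonneg₁
  have hb := H.nonneg₂
  have hγc := H.contDiff₀.continuous_deriv le_rfl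
  have hhc := H.contDiff₁.continuous_deriv le_rfl
  have hkc := H.contDiff₂.continuous_deriv le_rfl
  have hγM : ∀ u, ‖deriv γ u‖ ≤ M := fun u => by
    have := (H.chordArc false false).norm_le u
    rw [H.deriv_parallelogram] at this
    simpa [parallelogram] using this
  have hM : 0 ≤ M := (norm_nonneg _).trans (hγM 0)
  set T : ℝ → ℝ := fun s => p.1 + s * p.2 with hT
  have hTc : Continuous T := by fun_prop
  have hT0 : T 0 = p.1 := by simp [hT]
  set Δ : (ℝ → Rn n) → ℝ → Rn n := fun f s => f (T s) - f p.1 with hΔ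
  have hΔc : ∀ f : ℝ → Rn n, Continuous f → Continuous (Δ f) := fun f hf =>
    (hf.comp hTc).sub continuous_const
  set q : ℝ → ℝ := fun s => ‖Δ (deriv γ) s‖ ^ 2 + ‖Δ (deriv h) s‖ ^ 2 / a ^ 2
    + ‖Δ (deriv k) s‖ ^ 2 / b ^ 2 with hq
  have hq0 : ∀ s, 0 ≤ q s := fun s => by positivity
  have hqc : Continuous q := by
    have h1 := hΔc _ hγc
    have h2 := hΔc _ hhc
    have h3 := hΔc _ hkc
    exact ((h1.norm.pow 2).add ((h2.norm.pow 2).div_const _)).add ((h3.norm.pow 2).div_const _)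
  have hqi : ∫ s in (0:ℝ)..1, (3 * √(q s)) * (3 * √(q s)) = 9 * (meanSqOsc (deriv γ) p
      + meanSqOsc (deriv h) p / a ^ 2 + meanSqOsc (deriv k) p / b ^ 2) := by
    have e : ∀ s, (3 * √(q s)) * (3 * √(q s)) = 9 * q s := fun s => by
      rw [mul_mul_mul_comm, Real.mul_self_sqrt (hq0 s)]; norm_num
    simp only [e]
    have i1 : ∀ f : ℝ → Rn n, Continuous f → ∀ r : ℝ,
        IntervalIntegrable (fun s => ‖Δ f s‖ ^ 2 / r) volume 0 1 := fun f hf r =>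
      (((hΔc f hf).norm.pow 2).div_const r).intervalIntegrable _ _
    have i2 : IntervalIntegrable (fun s => ‖Δ (deriv γ) s‖ ^ 2) volume 0 1 :=
      ((hΔc _ hγc).norm.pow 2).intervalIntegrable _ _
    rw [intervalIntegral.integral_const_mul, hq,
      intervalIntegral.integral_add (i2.add (i1 _ hhc _)) (i1 _ hkc _),
      intervalIntegral.integral_add i2 (i1 _ hhc _),
      intervalIntegral.integral_div, intervalIntegral.integral_div]
    rfl
  have hmul : ∀ {x y e : ℝ}, 0 ≤ y → 0 ≤ e → (e = 0 → y = 0) → y ^ 2 / e ^ 2 ≤ x →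
      y ≤ 3 * √x * e := by
    intro x y e hy he h0 hle
    rcases eq_or_lt_of_le he with rfl | he'
    · simp [h0 rfl]
    · have h1 : y / e ≤ √x := Real.le_sqrt_of_sq_le (by rwa [div_pow])
      rw [div_le_iff₀ he'] at h1
      nlinarith [Real.sqrt_nonneg x]
  have hΔ0 : ∀ {f : ℝ → Rn n} {e : ℝ}, (∀ u, ‖f u‖ ≤ e) → ∀ s, e = 0 → ‖Δ f s‖ = 0 := by
    rintro f e hf s rfl
    have : ∀ u, f u = 0 := fun u => norm_le_zero_iff.1 (hf u)
    simp [hΔ, this]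
  have hle : ∀ {e : ℝ}, 0 ≤ e → e ≤ 1 → ∀ {y : ℝ}, (e = 0 → y = 0) → y ^ 2 ≤ y ^ 2 / e ^ 2 := by
    intro e he he1 y h0
    rcases eq_or_lt_of_le he with rfl | he'
    · simp [h0 rfl]
    · exact le_div_self (sq_nonneg y) (by positivity) (pow_le_one₀ he he1)
  have key := HC a b (fun i j s => parallelogram (deriv γ (T s)) (deriv h (T s)) (deriv k (T s)) i j)
    (fun s => 3 * √(q s)) ha hb ?_ (hqc.sqrt.const_mul 3) ?_ ?_ ?_ ?_
  · rw [hqi] at key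
    refine ⟨?_, ?_⟩
    · simpa only [segMean, H.deriv_parallelogram] using key.1.mono (by linarith) ha hb
    · have := key.2.const_mul (1 / |p.2| ^ α)
      have hw : 0 ≤ |p.2| ^ α := by positivity
      rw [abs_of_nonneg (by positivity)] at this
      have e : 9 * C * (meanSqOsc (deriv γ) p / |p.2| ^ α + meanSqOsc (deriv h) p / |p.2| ^ α / a ^ 2
          + meanSqOsc (deriv k) p / |p.2| ^ α / b ^ 2) = 1 / |p.2| ^ α * (C * (9 * (meanSqOsc (deriv γ) p
      + meanSqOsc (deriv h) p / a ^ 2 + meanSqOsc (deriv k) p / b ^ 2))) := by ring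
      rw [e]
      have e1 : T 1 = p.1 + p.2 := by simp [hT]
      simpa only [ohMain, segMean, H.deriv_parallelogram, hT0, e1] using this
  · intro i j
    have h1 : Continuous fun s => cond i (deriv h (T s)) 0 := by
      cases i
      · exact continuous_const
      · exact hhc.comp hTc
    have h2 : Continuous fun s => cond j (deriv k (T s)) 0 := by
      cases j
      · exact continuous_const
      · exact hkc.comp hTc
    exact ((hγc.comp hTc).add h1).add h2
  · intro s _
    have h1 := H.norm_le₁ (T s)
    have h2 := H.norm_le₂ (T s)
    have h3 := H.le_one₁
    have h4 := H.le_one₂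
    refine SqBound.parallelogram ?_ ?_ ?_ ha hb
    · linarith [hγM (T s)]
    · nlinarith
    · nlinarith
  · intro s _
    have e : ∀ i j, parallelogram (deriv γ (T s)) (deriv h (T s)) (deriv k (T s)) i j
        - parallelogram (deriv γ (T 0)) (deriv h (T 0)) (deriv k (T 0)) i j
        = parallelogram (Δ (deriv γ) s) (Δ (deriv h) s) (Δ (deriv k) s) i j := by
      intro i j
      rw [hT0]
      cases i <;> cases j <;> simp [parallelogram, hΔ] <;> abel
    simp only [e]
    have z1 := hΔ0 H.norm_le₁ s
    have z2 := hΔ0 H.norm_le₂ s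
    have q0 : 0 ≤ ‖Δ (deriv γ) s‖ ^ 2 := by positivity
    have q1 : 0 ≤ ‖Δ (deriv h) s‖ ^ 2 / a ^ 2 := by positivity
    have q2 : 0 ≤ ‖Δ (deriv k) s‖ ^ 2 / b ^ 2 := by positivity
    refine SqBound.parallelogram ?_ (hmul (norm_nonneg _) ha z1 ?_) (hmul (norm_nonneg _) hb z2 ?_)
      ha hb
    · have l1 := hle ha H.le_one₁ z1
      have l2 := hle hb H.le_one₂ z2
      have s0 : ‖Δ (deriv γ) s‖ ≤ √(q s) := Real.le_sqrt_of_sq_le (by simp only [hq]; linarith)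
      have s1 : ‖Δ (deriv h) s‖ ≤ √(q s) := Real.le_sqrt_of_sq_le (by simp only [hq]; linarith)
      have s2 : ‖Δ (deriv k) s‖ ≤ √(q s) := Real.le_sqrt_of_sq_le (by simp only [hq]; linarith)
      linarith
    · simp only [hq]; linarith
    · simp only [hq]; linarith
  · intro i j s _
    have := (H.chordArc i j).le_norm_deriv (T s)
    rwa [H.deriv_parallelogram] at this
  · intro i j
    have := (H.chordArc i j).le_norm p.1 p.2 hp
    simpa only [segMean, H.deriv_parallelogram] using this

theorem exists_sqBound_integral_ohMain {σ : ℝ} (hσ : 0 ≤ σ) (n : ℕ) {c : ℝ} (hc : 0 < c) (M : ℝ) :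
    ∃ C, 0 ≤ C ∧ ∀ (a b : ℝ) (γ h k : ℝ → Rn n), ChordArcFamily c M a b γ h k →
      gagliardoSq σ (deriv γ) < ⊤ → gagliardoSq σ (deriv h) < ⊤ → gagliardoSq σ (deriv k) < ⊤ →
      (gagliardoSq σ (deriv h)).toReal ≤ a ^ 2 → (gagliardoSq σ (deriv k)).toReal ≤ b ^ 2 →
      (∀ i j, Integrable (ohMain (1 + 2 * σ) (parallelogram γ h k i j)) pairMeasure) ∧
      SqBound (C * ((gagliardoSq σ (deriv γ)).toReal + 2)) a b
        (fun i j => ∫ p, ohMain (1 + 2 * σ) (parallelogram γ h k i j) p ∂pairMeasure) := by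
  obtain ⟨C, hC, HC⟩ := exists_sqBound (1 + 2 * σ) n hc M
  refine ⟨C, hC, fun a b γ h k H hγ hh hk hha hkb => ?_⟩
  have hγc := H.contDiff₀.continuous_deriv le_rfl
  have hhc := H.contDiff₁.continuous_deriv le_rfl
  have hkc := H.contDiff₂.continuous_deriv le_rfl
  have i0 := integrable_meanSqOsc_div hσ hγc hγ
  have i1 := (integrable_meanSqOsc_div hσ hhc hh).div_const (a ^ 2)
  have i2 := (integrable_meanSqOsc_div hσ hkc hk).div_const (b ^ 2)
  have iW := ((i0.add i1).add i2).const_mul C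
  have hae := ae_pairMeasure_abs_lt.mono fun p hp => (HC a b γ h k H p hp.le).2
  have hint : ∀ i j, Integrable (ohMain (1 + 2 * σ) (parallelogram γ h k i j)) pairMeasure :=
    fun i j => iW.mono' (ChordArc.measurable_ohMain (H.chordArc i j).contDiff).aestronglyMeasurable
      (hae.mono fun p hp => hp.bd i j)
  refine ⟨hint, (SqBound.integral hint iW hae).mono ?_ H.nonneg₁ H.nonneg₂⟩
  rw [integral_const_mul, integral_add' (i0.add i1) i2, integral_add' i0 i1, integral_div,
    integral_div]
  have l0 := integral_meanSqOsc_div_le hσ hγc hγ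
  have l1 := div_le_one_of_le₀ ((integral_meanSqOsc_div_le hσ hhc hh).trans hha) (sq_nonneg a)
  have l2 := div_le_one_of_le₀ ((integral_meanSqOsc_div_le hσ hkc hk).trans hkb) (sq_nonneg b)
  exact mul_le_mul_of_nonneg_left (by linarith) hC

theorem exists_sqBound_halfArcEnergy (α : ℝ) (n : ℕ) {c : ℝ} (hc : 0 < c) (M : ℝ) :
    ∃ C, 0 ≤ C ∧ ∀ (a b : ℝ) (γ h k : ℝ → Rn n), ChordArcFamily c M a b γ h k →
      SqBound C a b (fun i j => halfArcEnergy α (deriv (parallelogram γ h k i j))) := by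
  obtain ⟨C, hC, HC⟩ := exists_sqBound α n hc M
  obtain ⟨K, hK, HK⟩ := SqBound.rpow (1 - α) (half_pos hc) (1 / 2 * M) (|1 / 2| * C)
  obtain ⟨L, hL, HL⟩ := SqBound.rpow (1 - α) (half_pos hc) (1 / 2 * M)
    (|1 / 2| * (|1 / 2| * C + |1 / 2| * C))
  refine ⟨4 * (C * (|(α - 1)⁻¹| * (K + K + |2| * L))), by positivity,
    fun a b γ h k H => ?_⟩
  have ha := H.nonneg₁
  have hb := H.nonneg₂
  set f := fun i j => deriv (parallelogram γ h k i j) with hf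
  have hfc : ∀ i j, Continuous fun θ => ‖f i j θ‖ := fun i j => (H.chordArc i j).contDeriv.norm
  have hsc : ∀ i j w, Continuous fun u => 1 / 2 * segMean (fun θ => ‖f i j θ‖) (u, w) :=
    fun i j w => continuous_const.mul ((continuous_segMean (hfc i j)).comp (by fun_prop))
  have hmem : ∀ i j u, ∀ w : ℝ, |w| ≤ 1 / 2 →
      1 / 2 * segMean (fun θ => ‖f i j θ‖) (u, w) ∈ Icc (c / 2) (1 / 2 * M) := by
    intro i j u w hw
    have h1 := (H.chordArc i j).le_segMean (u := u) hw
    have h2 := norm_segMean_le_of_norm_le (f := fun θ => ‖f i j θ‖) (M := M)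
      (fun θ => by rw [norm_norm]; exact (H.chordArc i j).norm_le θ) (u, w)
    have h3 := (le_abs_self _).trans h2
    exact ⟨by linarith, by linarith⟩
  have hp : |(1 / 2 : ℝ)| ≤ 1 / 2 := by norm_num
  have hm : |(-1 / 2 : ℝ)| ≤ 1 / 2 := by norm_num
  have hmid : ∀ {x y : ℝ}, x ∈ Icc (c / 2) (1 / 2 * M) → y ∈ Icc (c / 2) (1 / 2 * M) →
      1 / 2 * (x + y) ∈ Icc (c / 2) (1 / 2 * M) := fun hx hy =>
    ⟨by linarith [hx.1, hy.1], by linarith [hx.2, hy.2]⟩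
  have hne : ∀ {x : ℝ}, x ∈ Icc (c / 2) (1 / 2 * M) → x ≠ 0 ∨ 0 ≤ 1 - α := fun hx =>
    Or.inl ((half_pos hc).trans_le hx.1).ne'
  have hterm : ∀ x y, halfArcTerm α x y
      = (α - 1)⁻¹ * (y ^ (1 - α) + x ^ (1 - α) - 2 * (1 / 2 * (x + y)) ^ (1 - α)) := by
    intro x y
    rw [halfArcTerm, div_eq_inv_mul, one_div_mul_eq_div]
  have h4 := SqBound.intervalIntegral_unit (a := a) (b := b)
    (f := fun i j u => ‖f i j u‖ * halfArcTerm α (1 / 2 * segMean (fun θ => ‖f i j θ‖) (u, 1 / 2))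
      (1 / 2 * segMean (fun θ => ‖f i j θ‖) (u, -1 / 2)))
    (κ := fun _ => 4 * (C * (|(α - 1)⁻¹| * (K + K + |2| * L)))) ?_ continuous_const ?_
  · simpa [halfArcEnergy] using h4
  · intro i j
    simp only [hterm]
    refine (hfc i j).mul (continuous_const.mul (Continuous.sub (Continuous.add ?_ ?_)
      (continuous_const.mul ?_)))
    · exact (hsc i j _).rpow_const fun u => hne (hmem i j u _ hm)
    · exact (hsc i j _).rpow_const fun u => hne (hmem i j u _ hp)
    · exact (continuous_const.mul ((hsc i j _).add (hsc i j _))).rpow_const fun u =>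
        hne (hmid (hmem i j u _ hp) (hmem i j u _ hm))
  · intro u _
    simp only [hterm]
    have b0 := (HC a b γ h k H (u, 0) (by simp)).1
    have bp := (HC a b γ h k H (u, 1 / 2) hp).1.const_mul (1 / 2)
    have bm := (HC a b γ h k H (u, -1 / 2) hm).1.const_mul (1 / 2)
    simp only [segMean_zero_right] at b0
    have rp := HK a b _ ha hb bp fun i j => hmem i j u _ hp
    have rm := HK a b _ ha hb bm fun i j => hmem i j u _ hm
    have rr := HL a b _ ha hb ((bp.add bm).const_mul (1 / 2)) fun i j =>
      hmid (hmem i j u _ hp) (hmem i j u _ hm)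
    exact b0.mul (((rm.add rp).sub (rr.const_mul 2)).const_mul _) ha hb

theorem exists_sqBound_oharaER {σ : ℝ} (hσ : 0 < σ) (n : ℕ) {c : ℝ} (hc : 0 < c) (M G : ℝ) :
    ∃ C, 0 ≤ C ∧ ∀ (a b : ℝ) (γ h k : ℝ → Rn n), ChordArcFamily c M a b γ h k →
      gagliardoSq σ (deriv γ) < ⊤ → gagliardoSq σ (deriv h) < ⊤ → gagliardoSq σ (deriv k) < ⊤ →
      (gagliardoSq σ (deriv γ)).toReal ≤ G →
      (gagliardoSq σ (deriv h)).toReal ≤ a ^ 2 → (gagliardoSq σ (deriv k)).toReal ≤ b ^ 2 →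
      (∀ i j, oharaE (1 + 2 * σ) (parallelogram γ h k i j) < ⊤) ∧
      SqBound C a b (fun i j => oharaER (1 + 2 * σ) (parallelogram γ h k i j)) := by
  obtain ⟨C₁, h₁, H₁⟩ := exists_sqBound_integral_ohMain hσ.le n hc M
  obtain ⟨C₂, h₂, H₂⟩ := exists_sqBound_halfArcEnergy (1 + 2 * σ) n hc M
  refine ⟨max 0 (C₁ * (G + 2) + C₂), le_max_left _ _,
    fun a b γ h k H hγ hh hk hG hha hkb => ?_⟩
  obtain ⟨hint, hm⟩ := H₁ a b γ h k H hγ hh hk hha hkb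
  refine ⟨fun i j => ?_, ?_⟩
  · rw [(H.chordArc i j).oharaE_eq (by linarith) (hint i j)]
    exact ENNReal.ofReal_lt_top
  · have e : ∀ i j, oharaER (1 + 2 * σ) (parallelogram γ h k i j) = _ := fun i j =>
      (H.chordArc i j).oharaER_eq (by linarith) (hint i j)
    simp only [e]
    refine (hm.sub (H₂ a b γ h k H)).mono (le_trans ?_ (le_max_right _ _)) H.nonneg₁ H.nonneg₂
    gcongr

end ChordArcFamily

theorem ChordArc.chordArcFamily {c M a b : ℝ} {γ h k : ℝ → Rn n} (hγ : ChordArc c M γ)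
    (hh : Function.Periodic h 1) (hk : Function.Periodic k 1) (hhd : ContDiff ℝ 1 h)
    (hkd : ContDiff ℝ 1 k) (ha : ∀ u, ‖deriv h u‖ ≤ a) (hb : ∀ u, ‖deriv k u‖ ≤ b)
    (ha1 : a ≤ 1) (hb1 : b ≤ 1) (hac : a ≤ c / 4) (hbc : b ≤ c / 4) :
    ChordArcFamily (c / 2) (M + 2) a b γ h k := by
  have hc := hγ.pos
  have ha0 : 0 ≤ a := (norm_nonneg _).trans (ha 0)
  have hb0 : 0 ≤ b := (norm_nonneg _).trans (hb 0)
  have aux : ∀ {c' M' e : ℝ} {γ' g : ℝ → Rn n}, ChordArc c' M' γ' → Function.Periodic g 1 →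
      ContDiff ℝ 1 g → (∀ u, ‖deriv g u‖ ≤ e) → 0 ≤ e → e < c' → ∀ i : Bool,
      ChordArc (c' - e) (M' + e) (γ' + cond i g 0) := by
    intro c' M' e γ' g hγ' hg hgd hge he hec i
    cases i
    · simp only [cond_false, add_zero]
      exact hγ'.mono (by linarith) (by linarith) (by linarith)
    · exact hγ'.add hg hgd hge hec
  refine ⟨fun i j => ?_, hγ.contDiff, hhd, hkd, ha, hb, ha1, hb1⟩
  exact (aux (aux hγ hh hhd ha ha0 (by linarith) i) hk hkd hb hb0 (by linarith) j).mono
    (by linarith) (by linarith) (by linarith)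

variable {σ c M : ℝ} {γ : ℝ → Rn n}

/-- The set of injective regular curves is open. -/
theorem ChordArc.exists_perInjective_regularCurve (hσ : 1 < 2 * σ) (hγ : ChordArc c M γ)
    (hγm : MemH1 σ γ) : ∃ r > 0, ∀ γ₁, MemH1 σ γ₁ → H1Norm σ (γ₁ - γ) < r →
      PerInjective γ₁ ∧ RegularCurve γ₁ := by
  obtain ⟨C, hC, HC⟩ := MemH1.exists_norm_deriv_le n hσ
  have hC0 : 0 < C := by linarith
  refine ⟨c / C, div_pos hγ.pos hC0, fun γ₁ h₁ hr => ?_⟩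
  have hk : MemH1 σ (γ₁ - γ) := (H1Space n σ).sub_mem h₁ hγm
  rw [lt_div_iff₀' hC0] at hr
  have := hγ.add hk.1 hk.2.1 (HC _ hk) hr
  rw [add_sub_cancel] at this
  exact ⟨this.perInjective, this.regularCurve⟩

theorem ChordArc.exists_diffBound (hσ : 1 < 2 * σ) (hγ : ChordArc c M γ) (hγm : MemH1 σ γ) :
    oharaE (1 + 2 * σ) γ < ⊤ ∧
      ∃ r C, DiffBound (H1Space n σ) (H1Norm σ) (oharaER (1 + 2 * σ)) γ r C := by
  have hc := hγ.pos
  obtain ⟨L, hL, HL⟩ := MemH1.exists_norm_deriv_le n hσ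
  have hL0 : 0 < L := by linarith
  obtain ⟨C, hC, HC⟩ := ChordArcFamily.exists_sqBound_oharaER (σ := σ) (by linarith) n
    (half_pos hc) (M + 2) (gagliardoSq σ (deriv γ)).toReal
  set r := min 1 (c / 4) / L with hr
  have hr0 : 0 < r := by positivity
  have hsmall : ∀ {h : ℝ → Rn n}, H1Norm σ h < r → L * H1Norm σ h ≤ 1 ∧ L * H1Norm σ h ≤ c / 4 := by
    intro h hh
    rw [hr, lt_div_iff₀' hL0] at hh
    exact le_min_iff.1 hh.le
  have hsq : ∀ h : ℝ → Rn n, (gagliardoSq σ (deriv h)).toReal ≤ (L * H1Norm σ h) ^ 2 := fun h =>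
    (gagliardoSq_toReal_le_H1Norm_sq σ h).trans (pow_le_pow_left₀ (H1Norm_nonneg σ h)
      (le_mul_of_one_le_left (H1Norm_nonneg σ h) hL) 2)
  have key : ∀ h k : ℝ → Rn n, MemH1 σ h → MemH1 σ k → H1Norm σ h < r → H1Norm σ k < r → _ :=
    fun h k hh hk hhr hkr => HC (L * H1Norm σ h) (L * H1Norm σ k) γ h k
      (hγ.chordArcFamily hh.1 hk.1 hh.2.1 hk.2.1 (HL h hh) (HL k hk) (hsmall hhr).1 (hsmall hkr).1
        (hsmall hhr).2 (hsmall hkr).2) hγm.2.2 hh.2.2 hk.2.2 le_rfl (hsq h) (hsq k)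
  have hz : H1Norm σ (0 : ℝ → Rn n) < r := by
    have := H1Norm_smul (0:ℝ) (MemH1.zero (n := n) (σ := σ))
    rw [zero_smul, abs_zero, zero_mul] at this
    rwa [this]
  refine ⟨?_, r, C * L ^ 2, hr0, by positivity, fun h hh hhr => ?_, fun h hh k hk hhr hkr => ?_⟩
  · simpa [parallelogram] using (key 0 0 MemH1.zero MemH1.zero hz hz).1 false false
  · have := (key h 0 hh MemH1.zero hhr hz).2.fst false
    simp only [parallelogram, cond_true, cond_false, add_zero, Real.norm_eq_abs] at this
    refine this.trans ?_
    rw [← mul_assoc]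
    have := H1Norm_nonneg σ h
    gcongr
    exact le_self_pow₀ hL two_ne_zero
  · have := (key h k hh hk hhr hkr).2.mixed
    simp only [parallelogram, cond_true, cond_false, add_zero, Real.norm_eq_abs] at this
    calc _ = |oharaER (1 + 2 * σ) (γ + h + k) - oharaER (1 + 2 * σ) (γ + h)
          - oharaER (1 + 2 * σ) (γ + k) + oharaER (1 + 2 * σ) γ| := rfl
      _ ≤ _ := this
      _ = _ := by ring

end Perturbation

/-- For `α ∈ (2,3)` and `n ≥ 2`, the energy `E^α` is continuously Fréchet
differentiable on the set of injective regular curves in `H^{(1+α)/2,2}(ℝ/ℤ,ℝⁿ)`;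
in particular this set is open, `E^α` is finite on it, and `γ ↦ (E^α)'(γ)` is continuous. -/
theorem statement0 {n : ℕ} (hn : 2 ≤ n) {α : ℝ} (hα : α ∈ Ioo (2:ℝ) 3) :
    -- the set of injective regular curves is open in `H^{(1+α)/2,2}`
    (∀ γ : ℝ → Rn n, MemH1 ((α - 1) / 2) γ → PerInjective γ → RegularCurve γ →
      ∃ r > (0:ℝ), ∀ γ₁ : ℝ → Rn n, MemH1 ((α - 1) / 2) γ₁ →
        H1Norm ((α - 1) / 2) (γ₁ - γ) < r → PerInjective γ₁ ∧ RegularCurve γ₁) ∧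
    -- `E^α` is finite on this set
    (∀ γ : ℝ → Rn n, MemH1 ((α - 1) / 2) γ → PerInjective γ → RegularCurve γ →
      oharaE α γ < ⊤) ∧
    -- `E^α` is `C¹` on this set
    (∃ DE : (ℝ → Rn n) → (ℝ → Rn n) → ℝ,
      ∀ γ : ℝ → Rn n, MemH1 ((α - 1) / 2) γ → PerInjective γ → RegularCurve γ →
        -- `DE γ` is additive
        (∀ h₁ h₂ : ℝ → Rn n, MemH1 ((α - 1) / 2) h₁ → MemH1 ((α - 1) / 2) h₂ →
          DE γ (h₁ + h₂) = DE γ h₁ + DE γ h₂) ∧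
        -- `DE γ` is homogeneous
        (∀ (c : ℝ) (h : ℝ → Rn n), MemH1 ((α - 1) / 2) h → DE γ (c • h) = c * DE γ h) ∧
        -- `DE γ` is bounded
        (∃ M : ℝ, ∀ h : ℝ → Rn n, MemH1 ((α - 1) / 2) h →
          |DE γ h| ≤ M * H1Norm ((α - 1) / 2) h) ∧
        -- `DE γ` is the Fréchet derivative of `E^α` at `γ`
        (∀ η > (0:ℝ), ∃ r > (0:ℝ), ∀ h : ℝ → Rn n, MemH1 ((α - 1) / 2) h →
          H1Norm ((α - 1) / 2) h < r →
          |oharaER α (γ + h) - oharaER α γ - DE γ h| ≤ η * H1Norm ((α - 1) / 2) h) ∧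
        -- `γ ↦ DE γ` is continuous in the operator norm
        (∀ η > (0:ℝ), ∃ r > (0:ℝ), ∀ γ₁ : ℝ → Rn n, MemH1 ((α - 1) / 2) γ₁ →
          H1Norm ((α - 1) / 2) (γ₁ - γ) < r →
          ∀ h : ℝ → Rn n, MemH1 ((α - 1) / 2) h →
            |DE γ₁ h - DE γ h| ≤ η * H1Norm ((α - 1) / 2) h)) := by
  set σ := (α - 1) / 2 with hσ
  have hσ1 : 1 < 2 * σ := by linarith [hα.1]
  have hασ : α = 1 + 2 * σ := by linarith
  have hNs : ∀ c : ℝ, ∀ h ∈ H1Space n σ, H1Norm σ (c • h) = |c| * H1Norm σ h :=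
    fun c h hh => H1Norm_smul c hh
  have hN0 : ∀ h ∈ H1Space n σ, 0 ≤ H1Norm σ h := fun h _ => H1Norm_nonneg σ h
  have hopen : ∀ γ : ℝ → Rn n, MemH1 σ γ → PerInjective γ → RegularCurve γ →
      ∃ r > (0:ℝ), ∀ γ₁ : ℝ → Rn n, MemH1 σ γ₁ →
        H1Norm σ (γ₁ - γ) < r → PerInjective γ₁ ∧ RegularCurve γ₁ := by
    intro γ hγ hi hr
    obtain ⟨c, M, hcM⟩ := hγ.exists_chordArc hi hr
    exact hcM.exists_perInjective_regularCurve hσ1 hγ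
  have hdiff : ∀ γ : ℝ → Rn n, MemH1 σ γ → PerInjective γ → RegularCurve γ →
      oharaE α γ < ⊤ ∧ ∃ r C, DiffBound (H1Space n σ) (H1Norm σ) (oharaER α) γ r C := by
    intro γ hγ hi hr
    obtain ⟨c, M, hcM⟩ := hγ.exists_chordArc hi hr
    rw [hασ]
    exact hcM.exists_diffBound hσ1 hγ
  refine ⟨hopen, fun γ hγ hi hr => (hdiff γ hγ hi hr).1, dyadicDeriv (oharaER α),
    fun γ hγ hi hr => ?_⟩
  obtain ⟨-, r, C, hE⟩ := hdiff γ hγ hi hr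
  have hC := hE.nonneg
  have hCη : ∀ {η x : ℝ}, 0 < η → x < η / (C + 1) → 0 ≤ x → C * x ≤ η := by
    intro η x hη hx hx0
    rw [lt_div_iff₀ (by linarith)] at hx
    linarith
  refine ⟨fun h₁ h₂ hh₁ hh₂ => hE.dyadicDeriv_add hNs hN0 hh₁ hh₂,
    fun c h hh => hE.dyadicDeriv_smul hNs hN0 c hh,
    ⟨C, fun h hh => hE.abs_dyadicDeriv_le hNs hN0 hh⟩, fun η hη => ?_, fun η hη => ?_⟩
  · refine ⟨min r (η / (C + 1)), lt_min hE.pos (by positivity), fun h hh hlt => ?_⟩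
    refine (hE.abs_sub_dyadicDeriv_le hNs hN0 hh (hlt.trans_le (min_le_left _ _))).trans ?_
    rw [sq, ← mul_assoc]
    exact mul_le_mul_of_nonneg_right (hCη hη (hlt.trans_le (min_le_right _ _)) (hN0 h hh))
      (hN0 h hh)
  · obtain ⟨r', hr', H'⟩ := hopen γ hγ hi hr
    refine ⟨min (min r r') (η / (C + 1)), lt_min (lt_min hE.pos hr') (by positivity),
      fun γ₁ hγ₁ hlt h hh => ?_⟩
    have hk : γ₁ - γ ∈ H1Space n σ := (H1Space n σ).sub_mem hγ₁ hγ
    obtain ⟨hlt', hltη⟩ := lt_min_iff.1 hlt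
    obtain ⟨hltr, hltr'⟩ := lt_min_iff.1 hlt'
    obtain ⟨hi₁, hr₁⟩ := H' γ₁ hγ₁ hltr'
    obtain ⟨-, r₁, C₁, hE₁⟩ := hdiff γ₁ hγ₁ hi₁ hr₁
    have := hE.abs_dyadicDeriv_sub_le (k := γ₁ - γ) (r' := r₁) (C' := C₁)
      (by rwa [add_sub_cancel]) hNs hN0 hk hltr hh
    rw [add_sub_cancel] at this
    exact this.trans (mul_le_mul_of_nonneg_right (hCη hη hltη (hN0 _ hk)) (hN0 h hh))

end
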